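/- arXiv:2403.17669 — 2 statements merged into one kernel-verified Lean document; each statement's English description precedes it below -/
import Mathlib

section
/- Let d ≥ 2 and k ≥ 1 be integers and θ ∈ (0,1). There exists a constant C = C(θ, k, d) such that for all x ∈ 𝕊^k with x + e₁₁ ∈ 𝕊^k and all t ≥ 0, Σ_{z ∈ 𝕊^k} |p_t^ℓ(x,z) − p_t^ℓ(x + e₁₁, z)| ≤ C (√t + 1)^{−θ}. -/
open scoped Classical

noncomputable section

namespace SSEPPaper

/-- Configurations of `k` labelled particles on `ℤ^d`. -/
abbrev Conf (d k : ℕ) := Fin k → Fin d → ℤ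

/-- Euclidean norm of an integer vector in `ℤ^d`. -/
def vnorm {d : ℕ} (v : Fin d → ℤ) : ℝ := Real.sqrt (∑ j, ((v j : ℝ)) ^ 2)

/-- Euclidean norm on `(ℝ^d)^k` of an integer configuration. -/
def cnorm {d k : ℕ} (x : Conf d k) : ℝ := Real.sqrt (∑ i, ∑ j, ((x i j : ℝ)) ^ 2)

/-- The set `𝕊^k` of configurations with pairwise distinct particle positions. -/
def SSet (d k : ℕ) : Set (Conf d k) := {x | ∀ i j : Fin k, i ≠ j → x i ≠ x j}

/-- Swap of the coordinates `i` and `j` of a configuration, i.e. `σ^{i,j}x`. -/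
def cswap {d k : ℕ} (i j : Fin k) (x : Conf d k) : Conf d k := x ∘ Equiv.swap i j

/-- `δ^{i,j}w`: the configuration which agrees with `w` except that its `j`-th coordinate
is replaced by `w i`. -/
def cdelta {d k : ℕ} (i j : Fin k) (w : Conf d k) : Conf d k := Function.update w j (w i)

/-- Kronecker delta function at `y`. -/
def deltaFn {α : Type*} (y : α) : α → ℝ := fun x => if x = y then 1 else 0

/-- Generator of the labelled exclusion process, extended to all of `(ℤ^d)^k`. -/
def Lexc {d k : ℕ} (f : Conf d k → ℝ) : Conf d k → ℝ := fun x =>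
  (∑' y : Conf d k, if cnorm (y - x) = 1 ∧ y ∈ SSet d k then f y - f x else 0) +
    ∑ i : Fin k, ∑ j : Fin k,
      if i < j ∧ vnorm (x i - x j) = 1 ∧ x ∈ SSet d k then f (cswap i j x) - f x else 0

/-- Generator of `k` independent simple random walks on `ℤ^d`. -/
def Lrw {d k : ℕ} (f : Conf d k → ℝ) : Conf d k → ℝ := fun x =>
  ∑' z : Conf d k, if cnorm (z - x) = 1 then f z - f x else 0

/-- Generator (discrete Laplacian) of a single simple random walk on `ℤ^d`. -/
def Lap {d : ℕ} (f : (Fin d → ℤ) → ℝ) : (Fin d → ℤ) → ℝ := fun x =>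
  ∑' y : Fin d → ℤ, if vnorm (y - x) = 1 then f y - f x else 0

/-- Transition probabilities `p_t^ℓ(x,y) = (e^{tL^ℓ} δ_y)(x)` of the labelled exclusion
process, given by the exponential power series of the generator. -/
def ptl {d k : ℕ} (t : ℝ) (x y : Conf d k) : ℝ :=
  ∑' n : ℕ, t ^ n / n.factorial * ((Lexc (d := d) (k := k))^[n] (deltaFn y)) x

/-- Transition probabilities `p_t^{rw}(x,y) = (e^{tL^{rw}} δ_y)(x)` of `k` independent
simple random walks on `ℤ^d`. -/
def ptrw {d k : ℕ} (t : ℝ) (x y : Conf d k) : ℝ :=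
  ∑' n : ℕ, t ^ n / n.factorial * ((Lrw (d := d) (k := k))^[n] (deltaFn y)) x

/-- Transition probabilities `p_t(x,y) = (e^{tΔ} δ_y)(x)` of a single continuous-time
simple random walk on `ℤ^d`. -/
def pt1 {d : ℕ} (t : ℝ) (x y : Fin d → ℤ) : ℝ :=
  ∑' n : ℕ, t ^ n / n.factorial * ((Lap (d := d))^[n] (deltaFn y)) x

/-- The configuration `e₁₁ = ((1,0,…,0),(0,…,0),…,(0,…,0))`. -/
def e11 (d k : ℕ) : Conf d k := fun i j => if i.val = 0 ∧ j.val = 0 then 1 else 0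

/-! Two copies of the process whose initial configurations differ only in the position of one label,
and there by a unit step, are coupled so that they keep sharing the positions `y` of the other
particles. The two discrepancies `a` and `b` walk independently of one another, except that they
step together in the directions in which they agree, and they coalesce when they meet.

Until then the coupled process has the Lyapunov function
`Φ = h(‖a - b‖₁) + 4d ∑ᵢ (corrections for the collisions with yᵢ)`, where
`h(n) = ∑_{m < n} ((m + 1)^(-(1 - θ)) + K β^m)` is concave. A collision of a discrepancy with
another particle breaks the synchronization and costs a bounded amount. It is paid for by
`log (q(a - yᵢ) + |a - b|²) - log q(a - yᵢ)` and its analogue for `b`, where `q` is one plus the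
squared norm of two coordinates: in two dimensions `log q` is subharmonic, strictly so next to the
origin, whereas the first logarithm has drift `O(|a - b|⁻²)`. The errors at bounded distance are
absorbed by the geometric term, since `β = 1 / (2 + 4d)`. Altogether `Φ` has drift at most
`-c ‖a - b‖₁^(θ - 2) ≤ -c Φ^(1 - 2 / θ)`.

By the maximum principle such a drift forces the differences of the uniformized (discrete time)
semigroup along the coupling to decay like `Φ n^(-θ / 2)`, and averaging over a Poisson number of
steps gives `t^(-θ / 2)`. Testing against signs turns this gradient bound for bounded functions
into the bound for the total variation distance.
-/
/-! ### Jump generators and decay from a drift condition -/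

section JumpGenerator

variable {S M : Type*} [Fintype M]

/-- The generator of the jump process which leaves `s` for `next s m` at rate `rate s m`. -/
def jumpGen (rate : S → M → ℝ) (next : S → M → S) : Module.End ℝ (S → ℝ) where
  toFun F s := ∑ m, rate s m * (F (next s m) - F s)
  map_add' F G := by
    ext s
    simp only [Pi.add_apply, ← Finset.sum_add_distrib]
    exact Finset.sum_congr rfl fun m _ => by ring
  map_smul' c F := by
    ext s
    simp only [Pi.smul_apply, smul_eq_mul, RingHom.id_apply, Finset.mul_sum]
    exact Finset.sum_congr rfl fun m _ => by ring

/-- The uniformization `1 + A / Λ`: when `A` is a jump generator of total rate at most `Λ`, this is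
the transition operator of the discrete-time chain seen at the rings of a rate `Λ` clock. -/
def uniformized (Λ : ℝ) (A : Module.End ℝ (S → ℝ)) : Module.End ℝ (S → ℝ) :=
  1 + Λ⁻¹ • A

lemma uniformized_apply (Λ : ℝ) (A : Module.End ℝ (S → ℝ)) (F : S → ℝ) (s : S) :
    uniformized Λ A F s = F s + Λ⁻¹ * A F s := rfl

variable {rate : S → M → ℝ} {next : S → M → S} {Λ : ℝ}

lemma jumpGen_apply (F : S → ℝ) (s : S) :
    jumpGen rate next F s = ∑ m, rate s m * (F (next s m) - F s) := rfl

lemma jumpGen_const (c : ℝ) (s : S) : jumpGen rate next (fun _ => c) s = 0 := by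
  simp [jumpGen_apply]

lemma jumpGen_mono {F G : S → ℝ} {s : S} (hrate : ∀ m, 0 ≤ rate s m)
    (h : ∀ m, rate s m ≠ 0 → F (next s m) - F s ≤ G (next s m) - G s) :
    jumpGen rate next F s ≤ jumpGen rate next G s := by
  refine Finset.sum_le_sum fun m _ => ?_
  by_cases hm : rate s m = 0
  · simp [hm]
  · exact mul_le_mul_of_nonneg_left (h m hm) (hrate m)

lemma uniformized_jumpGen_mono {F G : S → ℝ} {s : S} (hΛ : 0 < Λ) (hrate : ∀ m, 0 ≤ rate s m)
    (hsum : ∑ m, rate s m ≤ Λ) (hs : F s ≤ G s)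
    (hnext : ∀ m, rate s m ≠ 0 → F (next s m) ≤ G (next s m)) :
    uniformized Λ (jumpGen rate next) F s ≤ uniformized Λ (jumpGen rate next) G s := by
  have average (H : S → ℝ) : uniformized Λ (jumpGen rate next) H s =
      ((Λ - ∑ m, rate s m) * H s + ∑ m, rate s m * H (next s m)) / Λ := by
    simp only [uniformized_apply, jumpGen_apply, mul_sub, Finset.sum_sub_distrib,
      ← Finset.sum_mul]
    field_simp
    ring
  rw [average, average]
  gcongr ?_ / _
  refine add_le_add (mul_le_mul_of_nonneg_left hs (by linarith)) (Finset.sum_le_sum fun m _ => ?_)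
  by_cases hm : rate s m = 0
  · simp [hm]
  · exact mul_le_mul_of_nonneg_left (hnext m hm) (hrate m)

lemma abs_uniformized_jumpGen_le {F G : S → ℝ} {s : S} (hΛ : 0 < Λ) (hrate : ∀ m, 0 ≤ rate s m)
    (hsum : ∑ m, rate s m ≤ Λ) (hs : |F s| ≤ G s)
    (hnext : ∀ m, rate s m ≠ 0 → |F (next s m)| ≤ G (next s m)) :
    |uniformized Λ (jumpGen rate next) F s| ≤ uniformized Λ (jumpGen rate next) G s := by
  refine abs_le.2 ⟨?_, uniformized_jumpGen_mono hΛ hrate hsum (abs_le.1 hs).2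
    fun m hm => (abs_le.1 (hnext m hm)).2⟩
  have h := uniformized_jumpGen_mono (F := -G) hΛ hrate hsum (abs_le.1 hs).1
    fun m hm => (abs_le.1 (hnext m hm)).1
  simpa only [map_neg, Pi.neg_apply] using h

lemma mul_div_le_rpow_of_mul_le_rpow {p κ c φ T : ℝ} (hp : 0 < p) (hp1 : p ≤ 1) (hκ : 1 ≤ κ)
    (hc : c ≤ κ) (hφ : 0 < φ) (hT : 0 < T) (h : κ * φ ≤ T ^ p) : c * (φ / T) ≤ φ ^ (1 - 1 / p) := by
  have hroot : κ * φ ^ (1 / p) ≤ T := by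
    calc κ * φ ^ (1 / p) ≤ κ ^ (1 / p) * φ ^ (1 / p) := by
          gcongr
          exact Real.self_le_rpow_of_one_le hκ (by rwa [one_le_div₀ hp])
      _ = (κ * φ) ^ (1 / p) := (Real.mul_rpow (by positivity) hφ.le).symm
      _ ≤ (T ^ p) ^ (1 / p) := by gcongr
      _ = T := by rw [← Real.rpow_mul hT.le, mul_one_div_cancel hp.ne', Real.rpow_one]
  rw [Real.rpow_sub hφ, Real.rpow_one, mul_div_assoc', div_le_div_iff₀ hT (by positivity)]
  calc c * φ * φ ^ (1 / p) ≤ κ * φ * φ ^ (1 / p) := by gcongr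
    _ = φ * (κ * φ ^ (1 / p)) := by ring
    _ ≤ φ * T := by gcongr

lemma one_sub_inv_mul_rpow_neg_le {p X : ℝ} (hp1 : p ≤ 1) (hX : 0 < X) :
    (1 - 1 / (X + 1)) * X ^ (-p) ≤ (X + 1) ^ (-p) := by
  have hX1 : 0 < X + 1 := by linarith
  have hratio : 1 - 1 / (X + 1) = X / (X + 1) := by field_simp; ring
  have hle : X / (X + 1) ≤ (X / (X + 1)) ^ p := by
    simpa using Real.rpow_le_rpow_of_exponent_ge (by positivity)
      (by rw [div_le_one hX1]; linarith) hp1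
  rw [hratio]
  calc X / (X + 1) * X ^ (-p) ≤ (X / (X + 1)) ^ p * X ^ (-p) := by gcongr
    _ = (X + 1) ^ (-p) := by
      rw [Real.div_rpow hX.le hX1.le, Real.rpow_neg hX.le, Real.rpow_neg hX1.le]
      field_simp

/-- As long as `Φ` is below `T ^ p`, where `T = X + 1`, the drift `-c Φ ^ (1 - 1 / p)` makes a step
of the uniformized chain lower `Φ` by `Φ / T`. -/
lemma uniformized_smul_rpow_neg_le {A : Module.End ℝ (S → ℝ)} {Φ : S → ℝ} {s : S} {p κ c X : ℝ}
    (hp : 0 < p) (hp1 : p ≤ 1) (hκ : 1 ≤ κ) (hc : 0 < c) (hΛ : 0 < Λ) (hκc : Λ / c ≤ κ)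
    (hΦ : 0 < Φ s) (hX : 0 < X) (hdrift : A Φ s ≤ -(c * Φ s ^ (1 - 1 / p)))
    (h : κ * Φ s ≤ (X + 1) ^ p) :
    uniformized Λ A ((κ * X ^ (-p)) • Φ) s ≤ κ * Φ s * (X + 1) ^ (-p) := by
  have hloss := mul_div_le_rpow_of_mul_le_rpow hp hp1 hκ hκc hΦ (by linarith) h
  have hstep : Λ⁻¹ * A Φ s ≤ -(Φ s / (X + 1)) := by
    rw [inv_mul_le_iff₀ hΛ]
    have : c * (Λ / c * (Φ s / (X + 1))) = Λ * (Φ s / (X + 1)) := by field_simp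
    linarith [mul_le_mul_of_nonneg_left hloss hc.le]
  calc uniformized Λ A ((κ * X ^ (-p)) • Φ) s
      = κ * ((Φ s + Λ⁻¹ * A Φ s) * X ^ (-p)) := by
        rw [map_smul, Pi.smul_apply, uniformized_apply, smul_eq_mul]
        ring
    _ ≤ κ * ((Φ s - Φ s / (X + 1)) * X ^ (-p)) := by gcongr; linarith
    _ = κ * Φ s * ((1 - 1 / (X + 1)) * X ^ (-p)) := by ring
    _ ≤ κ * Φ s * (X + 1) ^ (-p) := by gcongr; exact one_sub_inv_mul_rpow_neg_le hp1 hX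

/-- If `D` evolves by the uniformized chain on a set `V` up to the absorption in `Z`, where it
vanishes, then a Lyapunov function with drift `-c Φ ^ (1 - 1 / p)` makes it decay like `m ^ (-p)`.
-/
theorem abs_le_min_of_drift {V Z : Set S} {Φ : S → ℝ} {p c B : ℝ} (D : ℕ → S → ℝ)
    (hΛ : 0 < Λ) (hrate : ∀ s m, 0 ≤ rate s m) (hsum : ∀ s, ∑ m, rate s m ≤ Λ)
    (hclosed : ∀ s ∈ V \ Z, ∀ m, rate s m ≠ 0 → next s m ∈ V)
    (hp : 0 < p) (hp1 : p ≤ 1) (hc : 0 < c) (hΦ0 : ∀ s ∈ V, 0 ≤ Φ s)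
    (hΦ1 : ∀ s ∈ V \ Z, 1 ≤ Φ s)
    (hdrift : ∀ s ∈ V \ Z, jumpGen rate next Φ s ≤ -(c * Φ s ^ (1 - 1 / p)))
    (hB : ∀ s ∈ V, |D 0 s| ≤ B) (hzero : ∀ m, ∀ s ∈ V ∩ Z, D m s = 0)
    (hstep : ∀ m, ∀ s ∈ V \ Z, D (m + 1) s = uniformized Λ (jumpGen rate next) (D m) s)
    (m : ℕ) {s : S} (hs : s ∈ V) :
    |D m s| ≤ B * min 1 (max 1 (Λ / c) * Φ s * ((m : ℝ) + 1) ^ (-p)) := by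
  set κ := max 1 (Λ / c)
  have hκ : 1 ≤ κ := le_max_left _ _
  have hB0 : 0 ≤ B := (abs_nonneg _).trans (hB s hs)
  have hZ {s : S} (m : ℕ) (hs : s ∈ V ∩ Z) :
      |D m s| ≤ B * min 1 (κ * Φ s * ((m : ℝ) + 1) ^ (-p)) := by
    have := hΦ0 s hs.1
    rw [hzero m s hs, abs_zero]
    positivity
  induction m generalizing s with
  | zero =>
    by_cases hsZ : s ∈ Z
    · exact hZ 0 ⟨hs, hsZ⟩
    · have : 1 ≤ κ * Φ s := one_le_mul_of_one_le_of_one_le hκ (hΦ1 s ⟨hs, hsZ⟩)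
      simpa [min_eq_left this] using hB s hs
  | succ m ih =>
    by_cases hsZ : s ∈ Z
    · exact hZ (m + 1) ⟨hs, hsZ⟩
    have hsV : s ∈ V \ Z := ⟨hs, hsZ⟩
    have compare {G : S → ℝ} (hG : ∀ s ∈ V, min 1 (κ * Φ s * ((m : ℝ) + 1) ^ (-p)) ≤ G s) :
        |D (m + 1) s| ≤ B * uniformized Λ (jumpGen rate next) G s := by
      rw [hstep m s hsV, ← smul_eq_mul, ← Pi.smul_apply, ← map_smul]
      have hbound (s : S) (hs : s ∈ V) : |D m s| ≤ (B • G) s :=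
        (ih hs).trans (mul_le_mul_of_nonneg_left (hG s hs) hB0)
      exact abs_uniformized_jumpGen_le hΛ (hrate s) (hsum s) (hbound s hs)
        fun n hn => hbound _ (hclosed s hsV n hn)
    have hunit : |D (m + 1) s| ≤ B * 1 := by
      simpa only [uniformized_apply, jumpGen_const, mul_zero, add_zero]
        using compare (G := fun _ => 1) fun _ _ => min_le_left _ _
    rw [Nat.cast_succ]
    rcases le_total 1 (κ * Φ s * ((m : ℝ) + 1 + 1) ^ (-p)) with hlarge | hsmall
    · rwa [min_eq_left hlarge]
    · have hbelow : κ * Φ s ≤ ((m : ℝ) + 1 + 1) ^ p := by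
        rwa [Real.rpow_neg (by positivity), ← div_eq_mul_inv, div_le_one (by positivity)] at hsmall
      rw [min_eq_right hsmall]
      refine (compare (G := (κ * ((m : ℝ) + 1) ^ (-p)) • Φ) fun s _ =>
        (min_le_right _ _).trans_eq (mul_right_comm _ _ _)).trans ?_
      exact mul_le_mul_of_nonneg_left (uniformized_smul_rpow_neg_le hp hp1 hκ hc hΛ
        (le_max_right _ _) (by linarith [hΦ1 s hsV]) (by positivity) (hdrift s hsV) hbelow) hB0

end JumpGenerator

/-! ### Exponentials of jump generators and Poissonization -/

lemma exp_smul_eq_exp_neg_smul_exp {E : Type*} [NormedRing E] [NormedAlgebra ℝ E]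
    [CompleteSpace E] (A : E) {Λ : ℝ} (hΛ : Λ ≠ 0) (t : ℝ) :
    NormedSpace.exp (t • A) =
      Real.exp (-(Λ * t)) • NormedSpace.exp ((Λ * t) • (1 + Λ⁻¹ • A)) := by
  let _ : NormedAlgebra ℚ E := NormedAlgebra.restrictScalars ℚ ℝ E
  have hsplit : t • A = (-(Λ * t)) • (1 : E) + (Λ * t) • (1 + Λ⁻¹ • A) := by
    rw [smul_add, smul_smul, mul_right_comm, mul_inv_cancel₀ hΛ, one_mul, neg_smul,
      neg_add_cancel_left]
  have hscalar : NormedSpace.exp ((-(Λ * t)) • (1 : E)) = Real.exp (-(Λ * t)) • (1 : E) := by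
    rw [← Algebra.algebraMap_eq_smul_one, ← NormedSpace.algebraMap_exp_comm,
      Algebra.algebraMap_eq_smul_one, Real.exp_eq_exp_ℝ]
  rw [hsplit, NormedSpace.exp_add_of_commute (((Commute.one_left _).smul_left _).smul_right _),
    hscalar, smul_mul_assoc, one_mul]

lemma hasSum_exp_smul_apply {E : Type*} [NormedAddCommGroup E] [NormedSpace ℝ E]
    [CompleteSpace E] (A : E →L[ℝ] E) (t : ℝ) (φ : E →L[ℝ] ℝ) (u : E) :
    HasSum (fun n : ℕ => t ^ n / (n.factorial : ℝ) * φ ((A ^ n) u))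
      (φ ((NormedSpace.exp (t • A) : E →L[ℝ] E) u)) := by
  refine (((NormedSpace.exp_series_hasSum_exp' (𝕂 := ℝ) (t • A)).mapL
    (ContinuousLinearMap.apply ℝ E u)).mapL φ).congr_fun fun n => ?_
  rw [smul_pow, smul_smul]
  simp only [ContinuousLinearMap.apply_apply, map_smul, smul_eq_mul]
  ring

lemma exists_hasSum_exp_uniformization {E : Type*} [NormedAddCommGroup E] [NormedSpace ℝ E]
    [CompleteSpace E] (A : E →L[ℝ] E) {Λ : ℝ} (hΛ : Λ ≠ 0) (t : ℝ) :
    ∃ T : E →L[ℝ] E, ∀ (φ : E →L[ℝ] ℝ) (u : E),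
      HasSum (fun n : ℕ => t ^ n / (n.factorial : ℝ) * φ ((A ^ n) u)) (φ (T u)) ∧
      HasSum (fun n : ℕ => Real.exp (-(Λ * t)) *
        ((Λ * t) ^ n / (n.factorial : ℝ) * φ (((1 + Λ⁻¹ • A) ^ n) u))) (φ (T u)) := by
  refine ⟨NormedSpace.exp (t • A), fun φ u => ⟨hasSum_exp_smul_apply A t φ u, ?_⟩⟩
  have h := (hasSum_exp_smul_apply (1 + Λ⁻¹ • A) (Λ * t) φ u).mul_left (Real.exp (-(Λ * t)))
  rwa [← smul_eq_mul (Real.exp _) (φ _), ← map_smul, ← smul_apply,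
    ← exp_smul_eq_exp_neg_smul_exp A hΛ t] at h

section JumpExponential

open scoped BoundedContinuousFunction

variable {S M : Type*} [Fintype M] {rate : S → M → ℝ} {next : S → M → S} {Λ : ℝ}

lemma abs_jumpGen_le {u : S → ℝ} {s : S} {C : ℝ} (hrate : ∀ m, 0 ≤ rate s m)
    (hsum : ∑ m, rate s m ≤ Λ) (hu : ∀ s, |u s| ≤ C) : |jumpGen rate next u s| ≤ Λ * 2 * C := by
  have hC : 0 ≤ C := (abs_nonneg _).trans (hu s)
  calc |jumpGen rate next u s| ≤ ∑ m, |rate s m * (u (next s m) - u s)| :=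
        Finset.abs_sum_le_sum_abs _ _
    _ ≤ ∑ m, rate s m * (C + C) := by
        refine Finset.sum_le_sum fun m _ => ?_
        rw [abs_mul, abs_of_nonneg (hrate m)]
        exact mul_le_mul_of_nonneg_left ((abs_sub _ _).trans (add_le_add (hu _) (hu _))) (hrate m)
    _ = (∑ m, rate s m) * (2 * C) := by rw [Finset.sum_mul, two_mul]
    _ ≤ Λ * (2 * C) := by gcongr
    _ = Λ * 2 * C := by ring

lemma exists_continuousLinearMap_eq_jumpGen [TopologicalSpace S] [DiscreteTopology S]
    (hΛ : 0 ≤ Λ) (hrate : ∀ s m, 0 ≤ rate s m) (hsum : ∀ s, ∑ m, rate s m ≤ Λ) :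
    ∃ A : (S →ᵇ ℝ) →L[ℝ] (S →ᵇ ℝ), ∀ u, ⇑(A u) = jumpGen rate next u := by
  have hbound (u : S →ᵇ ℝ) (s : S) : ‖jumpGen rate next u s‖ ≤ Λ * 2 * ‖u‖ :=
    abs_jumpGen_le (hrate s) (hsum s) u.norm_coe_le_norm
  let A : (S →ᵇ ℝ) →ₗ[ℝ] (S →ᵇ ℝ) :=
    { toFun u := .ofNormedAddCommGroup (jumpGen rate next u) continuous_of_discreteTopology _
        (hbound u)
      map_add' u v := DFunLike.coe_injective (map_add (jumpGen rate next) ⇑u ⇑v)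
      map_smul' c u := DFunLike.coe_injective (map_smul (jumpGen rate next) c ⇑u) }
  exact ⟨A.mkContinuous (Λ * 2) fun u =>
    BoundedContinuousFunction.norm_ofNormedAddCommGroup_le _ (by positivity) (hbound u),
    fun u => rfl⟩

lemma coe_pow_apply_eq [TopologicalSpace S] {A : (S →ᵇ ℝ) →L[ℝ] (S →ᵇ ℝ)}
    {G : Module.End ℝ (S → ℝ)} (h : ∀ u, ⇑(A u) = G u) (n : ℕ) (u : S →ᵇ ℝ) :
    ⇑((A ^ n) u) = (G ^ n) u := by
  induction n with
  | zero => rfl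
  | succ n ih => rw [pow_succ', pow_succ', mul_apply_eq_comp, h, ih]; rfl

theorem exists_hasSum_exp_jumpGen (hΛ : 0 < Λ) (hrate : ∀ s m, 0 ≤ rate s m)
    (hsum : ∀ s, ∑ m, rate s m ≤ Λ) {u : S → ℝ} {C : ℝ} (hu : ∀ s, |u s| ≤ C) (t : ℝ) :
    ∃ v : S → ℝ, ∀ s,
      HasSum (fun n : ℕ => t ^ n / (n.factorial : ℝ) * ((jumpGen rate next) ^ n) u s) (v s) ∧
      HasSum (fun n : ℕ => Real.exp (-(Λ * t)) * ((Λ * t) ^ n / (n.factorial : ℝ) *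
        ((uniformized Λ (jumpGen rate next)) ^ n) u s)) (v s) := by
  let _ : TopologicalSpace S := ⊥
  have : DiscreteTopology S := ⟨rfl⟩
  obtain ⟨A, hA⟩ := exists_continuousLinearMap_eq_jumpGen (next := next) hΛ.le hrate hsum
  have hQ (w : S →ᵇ ℝ) : ⇑((1 + Λ⁻¹ • A) w) = uniformized Λ (jumpGen rate next) w := by
    ext s
    simp [uniformized_apply, ← hA]
  let w : S →ᵇ ℝ := .ofNormedAddCommGroup u continuous_of_discreteTopology C hu
  obtain ⟨T, hT⟩ := exists_hasSum_exp_uniformization A hΛ.ne' t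
  refine ⟨T w, fun s => ?_⟩
  have h := hT (BoundedContinuousFunction.evalCLM ℝ s) w
  simp only [BoundedContinuousFunction.evalCLM_apply, coe_pow_apply_eq hA, coe_pow_apply_eq hQ] at h
  exact h

end JumpExponential

lemma rpow_neg_le_mul_one_add_div {p a b : ℝ} (hp : 0 ≤ p) (hp1 : p ≤ 1) (ha : 0 < a)
    (hb : 0 < b) : a ^ (-p) ≤ b ^ (-p) * (1 + b / a) := by
  have hratio : (b / a) ^ p ≤ 1 + b / a := by
    have hr : 0 < b / a := by positivity
    rcases le_total (b / a) 1 with h | h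
    · linarith [Real.rpow_le_one hr.le h hp]
    · linarith [Real.rpow_le_self_of_one_le h hp1]
  calc a ^ (-p) = b ^ (-p) * (b / a) ^ p := by
        rw [Real.div_rpow hb.le ha.le, Real.rpow_neg ha.le, Real.rpow_neg hb.le]
        field_simp
    _ ≤ b ^ (-p) * (1 + b / a) := by gcongr

lemma hasSum_pow_div_factorial (μ : ℝ) :
    HasSum (fun n : ℕ => μ ^ n / (n.factorial : ℝ)) (Real.exp μ) := by
  rw [Real.exp_eq_exp_ℝ]
  exact NormedSpace.expSeries_div_hasSum_exp μ

lemma hasSum_pow_succ_div_factorial_succ (μ : ℝ) :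
    HasSum (fun n : ℕ => μ ^ (n + 1) / ((n + 1).factorial : ℝ)) (Real.exp μ - 1) := by
  simpa using (hasSum_nat_add_iff' 1).2 (hasSum_pow_div_factorial μ)

lemma pow_div_factorial_mul_le {μ : ℝ} (hμ : 0 ≤ μ) (n : ℕ) :
    μ ^ n / (n.factorial : ℝ) * (1 + (1 + μ) / (n + 1)) ≤
      2 * (μ ^ n / (n.factorial : ℝ)) + μ ^ (n + 1) / ((n + 1).factorial : ℝ) := by
  have hsucc : μ ^ n / (n.factorial : ℝ) * (1 + (1 + μ) / (n + 1)) =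
      μ ^ n / (n.factorial : ℝ) + μ ^ n / (n.factorial : ℝ) / (n + 1) +
        μ ^ (n + 1) / ((n + 1).factorial : ℝ) := by
    rw [Nat.factorial_succ, pow_succ]
    push_cast
    field_simp
    ring
  have hdiv : μ ^ n / (n.factorial : ℝ) / (n + 1) ≤ μ ^ n / (n.factorial : ℝ) :=
    div_le_self (by positivity) (by linarith [n.cast_nonneg (α := ℝ)])
  linarith

/-- A power-law bound survives averaging over a Poisson variable `N` of mean `μ`, since
`E[(1 + μ) / (N + 1)]` is bounded. -/
theorem abs_le_of_hasSum_poisson {μ p M c : ℝ} {g : ℕ → ℝ} (hμ : 0 ≤ μ) (hp : 0 ≤ p)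
    (hp1 : p ≤ 1) (hg : ∀ n : ℕ, |g n| ≤ M * ((n : ℝ) + 1) ^ (-p))
    (hc : HasSum (fun n : ℕ => Real.exp (-μ) * (μ ^ n / (n.factorial : ℝ) * g n)) c) :
    |c| ≤ 3 * M * (1 + μ) ^ (-p) := by
  have hM : 0 ≤ M := by simpa using (abs_nonneg _).trans (hg 0)
  have hmaj := (((hasSum_pow_div_factorial μ).mul_left 2).add
    (hasSum_pow_succ_div_factorial_succ μ)).mul_left (Real.exp (-μ) * M * (1 + μ) ^ (-p))
  have hterm (n : ℕ) : |Real.exp (-μ) * (μ ^ n / (n.factorial : ℝ) * g n)| ≤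
      Real.exp (-μ) * M * (1 + μ) ^ (-p) *
        (2 * (μ ^ n / (n.factorial : ℝ)) + μ ^ (n + 1) / ((n + 1).factorial : ℝ)) := by
    have hcmp := rpow_neg_le_mul_one_add_div (a := (n : ℝ) + 1) (b := 1 + μ) hp hp1
      (by positivity) (by positivity)
    rw [abs_mul, abs_mul, abs_of_pos (Real.exp_pos _), abs_of_nonneg (by positivity)]
    calc Real.exp (-μ) * (μ ^ n / (n.factorial : ℝ) * |g n|)
        ≤ Real.exp (-μ) * (μ ^ n / (n.factorial : ℝ) *
          (M * ((1 + μ) ^ (-p) * (1 + (1 + μ) / ((n : ℝ) + 1))))) := by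
          gcongr
          exact (hg n).trans (by gcongr)
      _ = Real.exp (-μ) * M * (1 + μ) ^ (-p) *
          (μ ^ n / (n.factorial : ℝ) * (1 + (1 + μ) / (n + 1))) := by ring
      _ ≤ _ := by gcongr; exact pow_div_factorial_mul_le hμ n
  have hsum : |c| ≤ Real.exp (-μ) * M * (1 + μ) ^ (-p) * (2 * Real.exp μ + (Real.exp μ - 1)) :=
    abs_le.2 ⟨hasSum_le (fun n => (abs_le.1 (hterm n)).1) hmaj.neg hc,
      hasSum_le (fun n => (abs_le.1 (hterm n)).2) hc hmaj⟩
  calc |c| ≤ Real.exp (-μ) * M * (1 + μ) ^ (-p) * (3 * Real.exp μ) :=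
        hsum.trans (by gcongr; linarith)
    _ = 3 * M * (1 + μ) ^ (-p) * (Real.exp (-μ) * Real.exp μ) := by ring
    _ = 3 * M * (1 + μ) ^ (-p) := by rw [← Real.exp_add, neg_add_cancel, Real.exp_zero, mul_one]

/-! ### Functions on the lattice -/

section Lattice

variable {ι : Type*}

/-- The direction opposite to a given one. -/
def opposite : ι × Bool ≃ ι × Bool := Equiv.prodCongr (Equiv.refl ι) Equiv.boolNot

lemma opposite_fst (e : ι × Bool) : (opposite e).1 = e.1 := rfl

lemma opposite_snd (e : ι × Bool) : (opposite e).2 = !e.2 := rfl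

/-- One plus the squared Euclidean norm of the projection onto the coordinates `i` and `j`. Its
logarithm is subharmonic because the projection is two-dimensional. -/
def planarWeight (i j : ι) (z : ι → ℤ) : ℝ := (z i : ℝ) ^ 2 + (z j : ℝ) ^ 2 + 1

lemma one_le_planarWeight (i j : ι) (z : ι → ℤ) : 1 ≤ planarWeight i j z :=
  le_add_of_nonneg_left (by positivity)

lemma planarWeight_neg (i j : ι) (z : ι → ℤ) : planarWeight i j (-z) = planarWeight i j z := by
  simp [planarWeight]

section Norms

variable [Fintype ι]

/-- The `ℓ¹` norm on the lattice. -/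
def l1Norm (r : ι → ℤ) : ℕ := ∑ j, (r j).natAbs

/-- The square of the Euclidean norm on the lattice. -/
def sqNorm (r : ι → ℤ) : ℝ := ∑ j, (r j : ℝ) ^ 2

lemma natAbs_le_l1Norm (r : ι → ℤ) (j : ι) : (r j).natAbs ≤ l1Norm r :=
  Finset.single_le_sum (f := fun j => (r j).natAbs) (fun _ _ => Nat.zero_le _) (Finset.mem_univ j)

lemma l1Norm_pos {r : ι → ℤ} (hr : r ≠ 0) : 0 < l1Norm r := by
  obtain ⟨j, hj⟩ := Function.ne_iff.1 hr
  exact (Int.natAbs_pos.2 hj).trans_le (natAbs_le_l1Norm r j)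

lemma sqNorm_neg (r : ι → ℤ) : sqNorm (-r) = sqNorm r := by simp [sqNorm]

lemma sqNorm_nonneg (r : ι → ℤ) : 0 ≤ sqNorm r := Finset.sum_nonneg fun _ _ => sq_nonneg _

lemma sq_l1Norm_le (r : ι → ℤ) : (l1Norm r : ℝ) ^ 2 ≤ Fintype.card ι * sqNorm r := by
  simpa [l1Norm, sqNorm, Nat.cast_natAbs] using
    sq_sum_le_card_mul_sum_sq (s := Finset.univ) (f := fun j => |(r j : ℝ)|)

lemma sqNorm_pos {r : ι → ℤ} (hr : r ≠ 0) : 0 < sqNorm r := by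
  obtain ⟨j, hj⟩ := Function.ne_iff.1 hr
  refine Finset.sum_pos' (fun _ _ => sq_nonneg _) ⟨j, Finset.mem_univ j, ?_⟩
  exact sq_pos_of_ne_zero (Int.cast_ne_zero.2 hj)

end Norms

variable [DecidableEq ι] {i j : ι}

/-- The `2 * card ι` unit steps of the lattice `ι → ℤ`, indexed by coordinate and sign. -/
def signedUnit (e : ι × Bool) : ι → ℤ := Pi.single e.1 (if e.2 then 1 else -1)

lemma signedUnit_opposite (e : ι × Bool) : signedUnit (opposite e) = -signedUnit e := by
  obtain ⟨j, b⟩ := e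
  cases b <;> simp [signedUnit, opposite, Pi.single_neg]

lemma signedUnit_ne_zero (e : ι × Bool) : signedUnit e ≠ 0 := by
  obtain ⟨j, b⟩ := e
  cases b <;> simp [signedUnit]

lemma signedUnit_injective : Function.Injective (signedUnit (ι := ι)) := by
  rintro ⟨j, b⟩ ⟨j', b'⟩ h
  have hj := congrFun h j
  by_cases hjj : j = j'
  · subst hjj
    cases b <;> cases b' <;> simp [signedUnit] at hj ⊢
  · cases b <;> cases b' <;> simp [signedUnit, hjj] at hj

lemma planarWeight_signedUnit_le (hij : i ≠ j) (e : ι × Bool) :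
    planarWeight i j (signedUnit e) ≤ 2 := by
  have hsq : ((if e.2 then 1 else -1 : ℤ) : ℝ) ^ 2 = 1 := by cases e.2 <;> simp
  by_cases hi : i = e.1
  · have hj : j ≠ e.1 := hi ▸ hij.symm
    simp only [planarWeight, signedUnit, hi, Pi.single_eq_same, hsq, Pi.single_eq_of_ne hj]
    norm_num
  · by_cases hj : j = e.1
    · subst hj
      simp only [planarWeight, signedUnit, Pi.single_eq_same, hsq, Pi.single_eq_of_ne hi]
      norm_num
    · simp [planarWeight, signedUnit, Pi.single_eq_of_ne hi, Pi.single_eq_of_ne hj]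

variable [Fintype ι]

lemma sum_comp_neg_signedUnit (G : (ι → ℤ) → ℝ) :
    ∑ e, G (-signedUnit e) = ∑ e, G (signedUnit e) := by
  simp only [← signedUnit_opposite]
  exact Equiv.sum_comp opposite fun e => G (signedUnit e)

lemma sum_comp_add_signedUnit {A : Type*} [AddCommGroup A] (f : ℤ → A) (r : ι → ℤ)
    (e : ι × Bool) : ∑ j, f ((r + signedUnit e) j) =
      ∑ j, f (r j) + (f (r e.1 + if e.2 then 1 else -1) - f (r e.1)) := by
  have hrest : ∑ j ∈ Finset.univ.erase e.1, f ((r + signedUnit e) j) =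
      ∑ j ∈ Finset.univ.erase e.1, f (r j) :=
    Finset.sum_congr rfl fun j hj => by simp [signedUnit, Finset.ne_of_mem_erase hj]
  rw [← Finset.add_sum_erase _ _ (Finset.mem_univ e.1),
    ← Finset.add_sum_erase _ (fun j => f (r j)) (Finset.mem_univ e.1), hrest]
  simp only [signedUnit, Pi.add_apply, Pi.single_eq_same]
  abel

lemma l1Norm_add_signedUnit (r : ι → ℤ) (e : ι × Bool) :
    (l1Norm (r + signedUnit e) : ℤ) =
    l1Norm r + ((r e.1 + if e.2 then 1 else -1).natAbs - (r e.1).natAbs) := by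
  simp only [l1Norm, Nat.cast_sum]
  exact sum_comp_add_signedUnit (fun n => (n.natAbs : ℤ)) r e

lemma l1Norm_add_signedUnit_of_eq_zero {r : ι → ℤ} {e : ι × Bool} (hr : r e.1 = 0) :
    l1Norm (r + signedUnit e) = l1Norm r + 1 := by
  have h := l1Norm_add_signedUnit r e
  rw [hr] at h
  cases he : e.2 <;> simp [he] at h <;> omega

lemma comp_l1Norm_add_add_comp_l1Norm_add_opposite (h : ℕ → ℝ) {r : ι → ℤ} {e : ι × Bool} {n : ℕ}
    (hr : r e.1 ≠ 0) (hn : l1Norm r = n + 1) :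
    h (l1Norm (r + signedUnit e)) + h (l1Norm (r + signedUnit (opposite e))) =
      h (n + 2) + h n := by
  have h₁ := l1Norm_add_signedUnit r e
  have h₂ := l1Norm_add_signedUnit r (opposite e)
  have hcases : l1Norm (r + signedUnit e) = n + 2 ∧ l1Norm (r + signedUnit (opposite e)) = n ∨
      l1Norm (r + signedUnit e) = n ∧ l1Norm (r + signedUnit (opposite e)) = n + 2 := by
    have hle := natAbs_le_l1Norm r e.1
    rw [opposite_fst, opposite_snd] at h₂
    cases he : e.2 <;>
      simp only [he, hn, Bool.not_true, Bool.not_false, Bool.false_eq_true, if_true,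
        if_false] at h₁ h₂ <;> omega
  rcases hcases with ⟨h₁, h₂⟩ | ⟨h₁, h₂⟩ <;> rw [h₁, h₂]
  exact add_comm _ _

lemma sqNorm_add_signedUnit (r : ι → ℤ) (e : ι × Bool) :
    sqNorm (r + signedUnit e) = sqNorm r + 2 * (if e.2 then 1 else -1) * r e.1 + 1 := by
  refine (sum_comp_add_signedUnit (fun n => (n : ℝ) ^ 2) r e).trans ?_
  cases he : e.2 <;> simp [sqNorm] <;> ring

lemma sqNorm_add_add_sqNorm_add_opposite (r : ι → ℤ) (e : ι × Bool) :
    sqNorm (r + signedUnit e) + sqNorm (r + signedUnit (opposite e)) = 2 * sqNorm r + 2 := by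
  rw [sqNorm_add_signedUnit, sqNorm_add_signedUnit, opposite_fst, opposite_snd]
  cases e.2 <;> simp <;> ring

lemma sqNorm_signedUnit (e : ι × Bool) : sqNorm (signedUnit e) = 1 := by
  simpa [sqNorm] using sqNorm_add_signedUnit 0 e

lemma sqNorm_eq_one_iff {r : ι → ℤ} : sqNorm r = 1 ↔ ∃ e, r = signedUnit e := by
  refine ⟨fun h => ?_, fun ⟨e, he⟩ => he ▸ sqNorm_signedUnit e⟩
  have hsum : ∑ i, r i ^ 2 = 1 := by
    rw [sqNorm] at h
    exact_mod_cast h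
  obtain ⟨i, hi⟩ : ∃ i, r i ≠ 0 := by
    by_contra! hzero
    simp [hzero] at hsum
  rw [← Finset.add_sum_erase _ _ (Finset.mem_univ i)] at hsum
  have hrest_nonneg : ∀ j ∈ Finset.univ.erase i, 0 ≤ r j ^ 2 := fun j _ => sq_nonneg _
  have hpos : 0 < r i ^ 2 := sq_pos_of_ne_zero hi
  have hrest : ∑ j ∈ Finset.univ.erase i, r j ^ 2 = 0 := by
    have := Finset.sum_nonneg hrest_nonneg
    omega
  refine ⟨(i, decide (r i = 1)), funext fun j => ?_⟩
  by_cases hj : j = i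
  · subst hj
    rcases sq_eq_one_iff.1 (by omega : r j ^ 2 = 1) with h | h <;> simp [signedUnit, h]
  · have hzero := (Finset.sum_eq_zero_iff_of_nonneg hrest_nonneg).1 hrest j (by simp [hj])
    simpa [signedUnit, hj] using hzero

/-- The discrete Laplacian of `g`. -/
def laplacian (g : (ι → ℤ) → ℝ) (z : ι → ℤ) : ℝ := ∑ e, (g (z + signedUnit e) - g z)

/-- The generator of the walk on the lattice whose steps to the origin are suppressed. It describes
the distance of two particles subject to exclusion. -/
def puncturedLaplacian (g : (ι → ℤ) → ℝ) (z : ι → ℤ) : ℝ :=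
  ∑ e, if z + signedUnit e = 0 then 0 else g (z + signedUnit e) - g z

lemma laplacian_le_puncturedLaplacian {g : (ι → ℤ) → ℝ} {z : ι → ℤ} (h : g 0 ≤ g z) :
    laplacian g z ≤ puncturedLaplacian g z := by
  refine Finset.sum_le_sum fun e _ => ?_
  split_ifs with h0
  · rw [h0]
    linarith
  · exact le_rfl

lemma laplacian_comp_planarWeight (hij : i ≠ j) (g : ℝ → ℝ) (z : ι → ℤ) :
    laplacian (fun z => g (planarWeight i j z)) z =
      g (planarWeight i j z + 1 + 2 * z i) + g (planarWeight i j z + 1 - 2 * z i) +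
      (g (planarWeight i j z + 1 + 2 * z j) + g (planarWeight i j z + 1 - 2 * z j)) -
      4 * g (planarWeight i j z) := by
  have hoff (l : ι) (hl : l ≠ i ∧ l ≠ j) (b : Bool) :
      planarWeight i j (z + signedUnit (l, b)) = planarWeight i j z := by
    simp [planarWeight, signedUnit, hl.1.symm, hl.2.symm]
  have hi (b : Bool) : planarWeight i j (z + signedUnit (i, b)) =
      planarWeight i j z + 1 + 2 * (if b then 1 else -1) * z i := by
    cases b <;> simp [planarWeight, signedUnit, hij] <;> ring
  have hj (b : Bool) : planarWeight i j (z + signedUnit (j, b)) =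
      planarWeight i j z + 1 + 2 * (if b then 1 else -1) * z j := by
    cases b <;> simp [planarWeight, signedUnit, hij.symm] <;> ring
  rw [laplacian, Fintype.sum_prod_type, Fintype.sum_eq_add i j hij fun l hl => by simp [hoff l hl]]
  simp only [Fintype.sum_bool, hi, hj]
  ring_nf
  simp only [Bool.false_eq_true, if_true, if_false]
  ring_nf

lemma laplacian_planarWeight (hij : i ≠ j) (z : ι → ℤ) : laplacian (planarWeight i j) z = 4 :=
  (laplacian_comp_planarWeight hij id z).trans (by simp only [id]; ring)

lemma puncturedLaplacian_planarWeight_le (hij : i ≠ j) (z : ι → ℤ) :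
    puncturedLaplacian (planarWeight i j) z ≤ 4 + 2 * Fintype.card ι := by
  have hterm (e : ι × Bool) :
      (if z + signedUnit e = 0 then 0 else
        planarWeight i j (z + signedUnit e) - planarWeight i j z) ≤
      planarWeight i j (z + signedUnit e) - planarWeight i j z + 1 := by
    split_ifs with h
    · have hz := planarWeight_signedUnit_le hij e
      rw [← planarWeight_neg, ← eq_neg_of_add_eq_zero_left h] at hz
      linarith [one_le_planarWeight i j (z + signedUnit e)]
    · linarith
  calc puncturedLaplacian (planarWeight i j) z
      ≤ ∑ e, (planarWeight i j (z + signedUnit e) - planarWeight i j z + 1) :=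
        Finset.sum_le_sum fun e _ => hterm e
    _ = laplacian (planarWeight i j) z + 2 * Fintype.card ι := by
        simp [Finset.sum_add_distrib, laplacian, mul_comm]
    _ = 4 + 2 * Fintype.card ι := by rw [laplacian_planarWeight hij]

lemma laplacian_log_planarWeight (hij : i ≠ j) (z : ι → ℤ) :
    laplacian (fun z => Real.log (planarWeight i j z)) z =
      Real.log (planarWeight i j z ^ 4 + (2 * planarWeight i j z ^ 2 + 8 * planarWeight i j z + 5 +
        16 * (z i * z j) ^ 2)) - Real.log (planarWeight i j z ^ 4) := by
  have hq : planarWeight i j z = (z i : ℝ) ^ 2 + (z j : ℝ) ^ 2 + 1 := rfl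
  have hprod : planarWeight i j z ^ 4 + (2 * planarWeight i j z ^ 2 + 8 * planarWeight i j z + 5 +
      16 * (z i * z j) ^ 2) =
      (planarWeight i j z + 1 + 2 * z i) * (planarWeight i j z + 1 - 2 * z i) *
      ((planarWeight i j z + 1 + 2 * z j) * (planarWeight i j z + 1 - 2 * z j)) := by
    rw [hq]
    ring
  have hpos : 0 < planarWeight i j z + 1 + 2 * z i ∧ 0 < planarWeight i j z + 1 - 2 * z i ∧
      0 < planarWeight i j z + 1 + 2 * z j ∧ 0 < planarWeight i j z + 1 - 2 * z j := by
    rw [hq]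
    refine ⟨?_, ?_, ?_, ?_⟩ <;>
      nlinarith [sq_nonneg ((z i : ℝ) + 1), sq_nonneg ((z i : ℝ) - 1), sq_nonneg ((z j : ℝ) + 1),
        sq_nonneg ((z j : ℝ) - 1)]
  obtain ⟨h₁, h₂, h₃, h₄⟩ := hpos
  rw [laplacian_comp_planarWeight hij, hprod, Real.log_mul (by positivity) (by positivity),
    Real.log_mul h₁.ne' h₂.ne', Real.log_mul h₃.ne' h₄.ne', Real.log_pow]
  push_cast
  ring

lemma laplacian_log_planarWeight_nonneg (hij : i ≠ j) (z : ι → ℤ) :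
    0 ≤ laplacian (fun z => Real.log (planarWeight i j z)) z := by
  have hq := one_le_planarWeight i j z
  rw [laplacian_log_planarWeight hij, sub_nonneg]
  exact Real.log_le_log (by positivity) (le_add_of_nonneg_right (by positivity))

lemma half_le_laplacian_log_planarWeight (hij : i ≠ j) {z : ι → ℤ} (hz : planarWeight i j z ≤ 2) :
    1 / 2 ≤ laplacian (fun z => Real.log (planarWeight i j z)) z := by
  have hq := one_le_planarWeight i j z
  have hdouble : 2 * planarWeight i j z ^ 4 ≤ planarWeight i j z ^ 4 +
      (2 * planarWeight i j z ^ 2 + 8 * planarWeight i j z + 5 + 16 * (z i * z j) ^ 2) := by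
    have hsq : planarWeight i j z ^ 2 ≤ 2 ^ 2 := pow_le_pow_left₀ (by positivity) hz 2
    nlinarith [sq_nonneg ((z i : ℝ) * z j),
      mul_le_mul_of_nonneg_right hsq (sq_nonneg (planarWeight i j z))]
  have hlog := Real.log_le_log (by positivity) hdouble
  rw [Real.log_mul two_ne_zero (by positivity)] at hlog
  rw [laplacian_log_planarWeight hij]
  linarith [Real.log_two_gt_d9]

end Lattice


/-! ### The stirring process -/

section Stirring

variable {κ V : Type*}

/-- The rate at which a particle of `x` triggers an exchange with the neighbouring site `q`. The
bond between two particles is counted from both of its ends, hence the factor `1 / 2`. -/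
def exchangeRate (x : κ → V) (q : V) : ℝ := if q ∈ Set.range x then 1 / 2 else 1

lemma exchangeRate_nonneg (x : κ → V) (q : V) : 0 ≤ exchangeRate x q := by
  unfold exchangeRate
  split_ifs <;> norm_num

lemma exchangeRate_le_one (x : κ → V) (q : V) : exchangeRate x q ≤ 1 := by
  unfold exchangeRate
  split_ifs <;> norm_num

variable [DecidableEq V]

/-- The configuration obtained from `x` by exchanging the contents of the sites `p` and `q`. -/
def exchange (p q : V) (x : κ → V) : κ → V := fun l => Equiv.swap p q (x l)

lemma exchange_comm (p q : V) (x : κ → V) : exchange p q x = exchange q p x := by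
  unfold exchange
  rw [Equiv.swap_comm]

lemma exchange_of_notMem {p q : V} {x : κ → V} (hp : p ∉ Set.range x)
    (hq : q ∉ Set.range x) : exchange p q x = x :=
  funext fun l => Equiv.swap_apply_of_ne_of_ne (fun h => hp ⟨l, h⟩) fun h => hq ⟨l, h⟩

lemma exchange_injective {x : κ → V} (hx : Function.Injective x) (p q : V) :
    Function.Injective (exchange p q x) :=
  (Equiv.swap p q).injective.comp hx

lemma notMem_range_exchange {p q c : V} {x : κ → V}
    (hc : Equiv.swap p q c ∉ Set.range x) : c ∉ Set.range (exchange p q x) := by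
  rintro ⟨l, rfl⟩
  exact hc ⟨l, by simp [exchange]⟩

lemma exchange_apply_apply_eq_comp_swap [DecidableEq κ] {x : κ → V} (hx : Function.Injective x)
    (l m : κ) : exchange (x l) (x m) x = x ∘ Equiv.swap l m :=
  funext fun _ => (hx.map_swap l m _).symm

lemma exchange_apply_eq_update [DecidableEq κ] {x : κ → V} (hx : Function.Injective x)
    {q : V} (hq : q ∉ Set.range x) (l : κ) : exchange (x l) q x = Function.update x l q := by
  funext m
  by_cases hm : m = l
  · subst hm
    simp [exchange]
  · rw [Function.update_of_ne hm]
    exact Equiv.swap_apply_of_ne_of_ne (hx.ne hm) fun h => hq ⟨m, h⟩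

lemma sum_ite_apply_eq [Fintype κ] {x : κ → V} (hx : Function.Injective x) (c : V)
    (G : V → ℝ) : ∑ l, (if x l = c then G (x l) else 0) = if c ∈ Set.range x then G c else 0 := by
  by_cases hc : c ∈ Set.range x
  · obtain ⟨l, rfl⟩ := hc
    simp [hx.eq_iff]
  · rw [if_neg hc]
    exact Finset.sum_eq_zero fun l _ => if_neg fun h => hc ⟨l, h⟩

variable {ι : Type*} [DecidableEq ι] [Fintype ι] [Fintype κ]

/-- The sum of a symmetric function `H` over all unoriented bonds of the lattice which touch a
particle of `x`. -/
def bondSum (x : κ → ι → ℤ) (H : (ι → ℤ) → (ι → ℤ) → ℝ) : ℝ :=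
  ∑ l, ∑ e, exchangeRate x (x l + signedUnit e) * H (x l) (x l + signedUnit e)

/-- The restriction of a function on bonds to the bonds which do not touch the site `α`. -/
def offSite (α : ι → ℤ) (H : (ι → ℤ) → (ι → ℤ) → ℝ) (p q : ι → ℤ) : ℝ :=
  if p = α ∨ q = α then 0 else H p q

lemma sum_ite_add_signedUnit_eq {x : κ → ι → ℤ} (hx : Function.Injective x) (c : ι → ℤ)
    (G : (ι → ℤ) → ℝ) :
    ∑ l, ∑ e, (if x l + signedUnit e = c then G (x l) else 0) =
      ∑ e, if c + signedUnit e ∈ Set.range x then G (c + signedUnit e) else 0 := by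
  rw [← sum_comp_neg_signedUnit fun v => if c + v ∈ Set.range x then G (c + v) else 0,
    Finset.sum_comm]
  refine Finset.sum_congr rfl fun e _ => ?_
  simp only [← eq_sub_iff_add_eq, ← sub_eq_add_neg]
  exact sum_ite_apply_eq hx _ G

lemma bondSum_eq_add {x : κ → ι → ℤ} (hx : Function.Injective x)
    {H : (ι → ℤ) → (ι → ℤ) → ℝ} (hsymm : ∀ p q, H p q = H q p) (α : ι → ℤ)
    (hzero : ∀ q, α ∉ Set.range x → q ∉ Set.range x → H α q = 0) :
    bondSum x H = ∑ e, H α (α + signedUnit e) + bondSum x (offSite α H) := by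
  have hcell (l : κ) (e : ι × Bool) :
      exchangeRate x (x l + signedUnit e) * H (x l) (x l + signedUnit e) =
      (if x l = α then exchangeRate x (x l + signedUnit e) * H (x l) (x l + signedUnit e) else 0) +
      (if x l + signedUnit e = α then exchangeRate x α * H (x l) α else 0) +
      exchangeRate x (x l + signedUnit e) * offSite α H (x l) (x l + signedUnit e) := by
    by_cases hl : x l = α
    · simp [offSite, hl, signedUnit_ne_zero]
    · by_cases he : x l + signedUnit e = α <;> simp [offSite, hl, he]
  have hsite (e : ι × Bool) :
      (if α ∈ Set.range x then exchangeRate x (α + signedUnit e) * H α (α + signedUnit e) else 0) +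
      (if α + signedUnit e ∈ Set.range x then exchangeRate x α * H (α + signedUnit e) α else 0) =
      H α (α + signedUnit e) := by
    rw [hsymm (α + signedUnit e) α]
    by_cases hα : α ∈ Set.range x <;> by_cases he : α + signedUnit e ∈ Set.range x
    · simp only [exchangeRate, hα, he, if_true]
      ring
    · simp only [exchangeRate, hα, he, if_true, if_false, one_mul, add_zero]
    · simp only [exchangeRate, hα, he, if_true, if_false, one_mul, zero_add]
    · simp only [hα, he, if_false, add_zero, hzero _ hα he]
  simp only [bondSum, Finset.sum_congr rfl fun l _ => Finset.sum_congr rfl fun e _ => hcell l e,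
    Finset.sum_add_distrib]
  rw [Finset.sum_comm (f := fun l e => if x l = α then _ else _),
    Finset.sum_congr rfl fun e _ => sum_ite_apply_eq hx α fun p =>
      exchangeRate x (p + signedUnit e) * H p (p + signedUnit e),
    sum_ite_add_signedUnit_eq hx α fun p => exchangeRate x α * H p α, ← Finset.sum_add_distrib,
    Finset.sum_congr rfl fun e _ => hsite e]

/-- The generator of the stirring process, which exchanges the contents of the two ends of every
bond at rate `1`. -/
def stirGen : Module.End ℝ ((κ → ι → ℤ) → ℝ) :=
  jumpGen (fun x (m : κ × ι × Bool) => exchangeRate x (x m.1 + signedUnit m.2))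
    fun x m => exchange (x m.1) (x m.1 + signedUnit m.2) x

lemma stirGen_apply (w : (κ → ι → ℤ) → ℝ) (x : κ → ι → ℤ) :
    stirGen w x = bondSum x fun p q => w (exchange p q x) - w x := by
  rw [stirGen, jumpGen_apply, Fintype.sum_prod_type, bondSum]

lemma stirGen_comp_sub {x : κ → ι → ℤ} (hx : Function.Injective x) {g : (ι → ℤ) → ℝ}
    (hg : ∀ z, g (-z) = g z) {i j : κ} (hij : i ≠ j) :
    stirGen (fun x => g (x i - x j)) x = 2 * puncturedLaplacian g (x i - x j) := by
  have hne : x j ≠ x i := hx.ne hij.symm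
  set H : (ι → ℤ) → (ι → ℤ) → ℝ := fun p q =>
    g (exchange p q x i - exchange p q x j) - g (x i - x j) with hH
  have hsymm (p q : ι → ℤ) : H p q = H q p := by simp only [hH, exchange_comm]
  have hleft (e : ι × Bool) : H (x i) (x i + signedUnit e) =
      if x i - x j + signedUnit e = 0 then 0 else
        g (x i - x j + signedUnit e) - g (x i - x j) := by
    simp only [sub_add_eq_add_sub, sub_eq_zero]
    split_ifs with h
    · simp only [hH, h, exchange, Equiv.swap_apply_left, Equiv.swap_apply_right]
      rw [← neg_sub (x i), hg, sub_self]
    · simp only [hH, exchange, Equiv.swap_apply_left,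
        Equiv.swap_apply_of_ne_of_ne hne (Ne.symm h)]
  have hright (e : ι × Bool) : offSite (x i) H (x j) (x j + signedUnit e) =
      if x i - x j + -signedUnit e = 0 then 0 else
        g (x i - x j + -signedUnit e) - g (x i - x j) := by
    simp only [← sub_eq_add_neg, sub_sub, sub_eq_zero, offSite, eq_comm (a := x i), hne, false_or]
    split_ifs with h
    · rfl
    · simp only [hH, exchange, Equiv.swap_apply_left,
        Equiv.swap_apply_of_ne_of_ne hne.symm (Ne.symm h)]
  have hrest : bondSum x (offSite (x j) (offSite (x i) H)) = 0 := by
    refine Finset.sum_eq_zero fun l _ => Finset.sum_eq_zero fun e _ => mul_eq_zero_of_right _ ?_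
    unfold offSite
    split_ifs with h₁ h₂
    · rfl
    · rfl
    · push Not at h₁ h₂
      simp only [hH, exchange, Equiv.swap_apply_of_ne_of_ne h₁.1.symm h₁.2.symm,
        Equiv.swap_apply_of_ne_of_ne h₂.1.symm h₂.2.symm, sub_self]
  rw [stirGen_apply, bondSum_eq_add hx hsymm (x i) fun _ h => (h ⟨i, rfl⟩).elim,
    bondSum_eq_add hx (fun p q => by simp only [offSite, or_comm, hsymm p q]) (x j)
      fun _ h => (h ⟨j, rfl⟩).elim, hrest, Finset.sum_congr rfl fun e _ => hleft e,
    Finset.sum_congr rfl fun e _ => hright e,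
    sum_comp_neg_signedUnit fun v => if x i - x j + v = 0 then 0 else
      g (x i - x j + v) - g (x i - x j), puncturedLaplacian]
  ring

end Stirring

section LabelledExclusion

variable {d k : ℕ}

lemma mem_SSet_iff {x : Conf d k} : x ∈ SSet d k ↔ Function.Injective x :=
  ⟨fun h _ _ => not_imp_not.1 (h _ _), fun h _ _ hij => h.ne hij⟩

lemma vnorm_eq_one_iff {v : Fin d → ℤ} : vnorm v = 1 ↔ ∃ e, v = signedUnit e :=
  Real.sqrt_eq_one.trans sqNorm_eq_one_iff

lemma sum_ite_eq_add_signedUnit (a b : Fin d → ℤ) (c : ℝ) :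
    ∑ e, (if b = a + signedUnit e then c else 0) = if vnorm (a - b) = 1 then c else 0 := by
  have hsub (e : Fin d × Bool) : b = a + signedUnit e ↔ a - b = signedUnit (opposite e) := by
    rw [signedUnit_opposite, ← neg_inj (a := a - b), neg_sub, neg_neg, sub_eq_iff_eq_add']
  simp only [hsub, vnorm_eq_one_iff]
  rw [Equiv.sum_comp opposite fun e => if a - b = signedUnit e then c else 0]
  split_ifs with h
  · obtain ⟨e, he⟩ := h
    simp [he, signedUnit_injective.eq_iff]
  · exact Finset.sum_eq_zero fun e _ => if_neg fun he => h ⟨e, he⟩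

lemma cnorm_sub_eq_one_iff {x y : Conf d k} :
    cnorm (y - x) = 1 ↔
      ∃ m : Fin k × Fin d × Bool, Function.update x m.1 (x m.1 + signedUnit m.2) = y := by
  have hsq : cnorm (y - x) = 1 ↔ sqNorm (fun m : Fin k × Fin d => (y - x) m.1 m.2) = 1 := by
    rw [cnorm, Real.sqrt_eq_one, sqNorm, Fintype.sum_prod_type]
  have hstep (l : Fin k) (j : Fin d) (b : Bool) :
      (fun m : Fin k × Fin d => (y - x) m.1 m.2) = signedUnit ((l, j), b) ↔
        Function.update x l (x l + signedUnit (j, b)) = y := by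
    simp only [funext_iff, Prod.forall, signedUnit, Function.update_apply, Pi.sub_apply]
    refine forall_congr' fun l' => ?_
    by_cases hl : l' = l
    · subst hl
      simp only [if_true, Pi.add_apply]
      refine forall_congr' fun j' => ?_
      by_cases hj : j' = j
      · subst hj
        simp only [Pi.single_eq_same]
        omega
      · simp only [Pi.single_eq_of_ne hj, Pi.single_eq_of_ne
          (show (l', j') ≠ (l', j) by simpa using hj)]
        omega
    · refine forall_congr' fun j' => ?_
      rw [if_neg hl, Pi.single_eq_of_ne (by simp [hl]), sub_eq_zero, eq_comm]
  simp only [hsq, sqNorm_eq_one_iff, Prod.exists, hstep]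

lemma update_add_signedUnit_injective (x : Conf d k) : Function.Injective
    fun m : Fin k × Fin d × Bool => Function.update x m.1 (x m.1 + signedUnit m.2) := by
  rintro ⟨l, e⟩ ⟨l', e'⟩ h
  have hl := congrFun h l
  by_cases hll : l = l'
  · subst hll
    simp only [Function.update_self, add_right_inj] at hl
    rw [signedUnit_injective hl]
  · simp only [Function.update_self, Function.update_of_ne hll] at hl
    exact (signedUnit_ne_zero e (left_eq_add.1 hl.symm)).elim

lemma tsum_ite_cnorm_sub_eq_one (x : Conf d k) (G : Conf d k → ℝ) :
    ∑' y, (if cnorm (y - x) = 1 then G y else 0) =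
      ∑ l, ∑ e, G (Function.update x l (x l + signedUnit e)) := by
  rw [← (update_add_signedUnit_injective x).tsum_eq fun y hy =>
      cnorm_sub_eq_one_iff.1 (by_contra fun h => hy (if_neg h)), tsum_fintype,
    Fintype.sum_prod_type]
  exact Finset.sum_congr rfl fun l _ => Finset.sum_congr rfl fun e _ =>
    if_pos (cnorm_sub_eq_one_iff.2 ⟨(l, e), rfl⟩)

lemma sum_sum_ite_lt {A : Fin k → Fin k → ℝ} (hsymm : ∀ i j, A i j = A j i)
    (hdiag : ∀ i, A i i = 0) :
    ∑ i, ∑ j, (if i < j then A i j else 0) = 1 / 2 * ∑ i, ∑ j, A i j := by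
  have hsplit (i j : Fin k) :
      A i j = (if i < j then A i j else 0) + (if j < i then A j i else 0) := by
    rcases lt_trichotomy i j with h | rfl | h
    · simp [h, h.not_gt]
    · simp [hdiag]
    · simp [h, h.not_gt, hsymm]
  conv_rhs => rw [Finset.sum_congr rfl fun i _ => Finset.sum_congr rfl fun j _ => hsplit i j]
  simp only [Finset.sum_add_distrib]
  rw [Finset.sum_comm (f := fun i j => if j < i then A j i else 0)]
  ring

lemma update_add_signedUnit_mem_SSet_iff {x : Conf d k} (hx : Function.Injective x) (l : Fin k)
    (e : Fin d × Bool) : Function.update x l (x l + signedUnit e) ∈ SSet d k ↔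
      x l + signedUnit e ∉ Set.range x := by
  constructor
  · rintro h ⟨m, hm⟩
    have hml : m ≠ l := by
      rintro rfl
      exact signedUnit_ne_zero e (left_eq_add.1 hm)
    exact h m l hml (by rw [Function.update_of_ne hml, Function.update_self, hm])
  · intro h
    rw [← exchange_apply_eq_update hx h, mem_SSet_iff]
    exact exchange_injective hx _ _

lemma Lexc_eq_stirGen (f : Conf d k → ℝ) {x : Conf d k} (hx : Function.Injective x) :
    Lexc f x = stirGen f x := by
  have hjump (l : Fin k) (e : Fin d × Bool) :
      exchangeRate x (x l + signedUnit e) * (f (exchange (x l) (x l + signedUnit e) x) - f x) =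
      (if Function.update x l (x l + signedUnit e) ∈ SSet d k then
        f (Function.update x l (x l + signedUnit e)) - f x else 0) +
      1 / 2 * ∑ m, if x m = x l + signedUnit e then f (exchange (x l) (x m) x) - f x else 0 := by
    rw [sum_ite_apply_eq hx _ fun q => f (exchange (x l) q x) - f x,
      update_add_signedUnit_mem_SSet_iff hx]
    by_cases h : x l + signedUnit e ∈ Set.range x
    · simp only [exchangeRate, h, not_true, if_true, if_false, zero_add]
    · simp only [exchangeRate, h, not_false_eq_true, if_true, if_false, mul_zero, add_zero,
        one_mul, exchange_apply_eq_update hx h]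
  rw [stirGen_apply, bondSum, Lexc]
  simp only [hjump, Finset.sum_add_distrib, ← Finset.mul_sum]
  congr 1
  · simp only [ite_and]
    exact tsum_ite_cnorm_sub_eq_one x fun y => if y ∈ SSet d k then f y - f x else 0
  · simp only [mem_SSet_iff.2 hx, and_true, ite_and]
    rw [sum_sum_ite_lt]
    · refine congrArg _ (Finset.sum_congr rfl fun l _ => ?_)
      rw [Finset.sum_comm]
      simp only [sum_ite_eq_add_signedUnit, exchange_apply_apply_eq_comp_swap hx, cswap]
    · intro i j
      have hnorm : vnorm (x j - x i) = vnorm (x i - x j) := by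
        simp [vnorm, fun a => sub_sq_comm (x j a : ℝ) (x i a)]
      rw [hnorm, cswap, cswap, Equiv.swap_comm]
    · intro i
      simp [vnorm]

lemma Lexc_iterate_eq_stirGen_pow (f : Conf d k → ℝ) (n : ℕ) {x : Conf d k}
    (hx : Function.Injective x) : Lexc^[n] f x = (stirGen ^ n) f x := by
  induction n generalizing x with
  | zero => rfl
  | succ n ih =>
    rw [Function.iterate_succ_apply', pow_succ', Module.End.mul_apply, Lexc_eq_stirGen _ hx,
      stirGen_apply, stirGen_apply]
    refine Finset.sum_congr rfl fun m _ => Finset.sum_congr rfl fun e _ => ?_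
    simp only [ih (exchange_injective hx _ _), ih hx]

end LabelledExclusion

/-! ### The coupled process -/

/-- Two configurations of `k + 1` particles which share the positions `rest` of all particles but
the first, which sits at `left` in one configuration and at `right` in the other. -/
structure PairState (d k : ℕ) where
  left : Fin d → ℤ
  right : Fin d → ℤ
  rest : Conf d k

namespace PairState

variable {d k : ℕ}

/-- The first of the two configurations. -/
def leftConf (s : PairState d k) : Conf d (k + 1) := Fin.cons s.left s.rest

/-- The second of the two configurations. -/
def rightConf (s : PairState d k) : Conf d (k + 1) := Fin.cons s.right s.rest

/-- The displacement between the two discrepancies. -/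
def gap (s : PairState d k) : Fin d → ℤ := s.left - s.right

/-- The state with the two configurations interchanged. -/
def swap (s : PairState d k) : PairState d k := ⟨s.right, s.left, s.rest⟩

/-- Both configurations of `s` belong to `𝕊^(k+1)`. -/
structure IsAdmissible (s : PairState d k) : Prop where
  rest_injective : Function.Injective s.rest
  left_notMem : s.left ∉ Set.range s.rest
  right_notMem : s.right ∉ Set.range s.rest

lemma IsAdmissible.swap {s : PairState d k} (hs : s.IsAdmissible) : s.swap.IsAdmissible :=
  ⟨hs.rest_injective, hs.right_notMem, hs.left_notMem⟩

lemma IsAdmissible.leftConf_injective {s : PairState d k} (hs : s.IsAdmissible) :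
    Function.Injective s.leftConf :=
  Fin.cons_injective_iff.2 ⟨hs.left_notMem, hs.rest_injective⟩

/-- The two discrepancies make a step in the direction `e` together. Walking together in the
directions in which they agree makes `‖gap‖₁` a fair walk, and not letting them do so when one of
them meets another particle keeps the positions of the other particles shared. -/
def Sync (s : PairState d k) (e : Fin d × Bool) : Prop :=
  s.left e.1 = s.right e.1 ∧ s.left + signedUnit e ∉ Set.range s.rest ∧
    s.right + signedUnit e ∉ Set.range s.rest

lemma sync_swap {s : PairState d k} {e : Fin d × Bool} : s.swap.Sync e ↔ s.Sync e := by
  simp only [Sync, swap, eq_comm (a := s.right e.1), and_comm (a := s.right + signedUnit e ∉ _)]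

/-- The other particles exchange the contents of the sites `p` and `q`. -/
def exchangeRest (s : PairState d k) (p q : Fin d → ℤ) : PairState d k :=
  ⟨s.left, s.right, exchange p q s.rest⟩

/-- The left discrepancy steps in the direction `e`, followed by the right one if `s.Sync e`. -/
def moveLeft (s : PairState d k) (e : Fin d × Bool) : PairState d k :=
  if s.Sync e then ⟨s.left + signedUnit e, s.right + signedUnit e, s.rest⟩
  else ⟨s.left + signedUnit e, s.right, exchange s.left (s.left + signedUnit e) s.rest⟩

/-- The right discrepancy steps in the direction `e`, unless `s.Sync e`, when this step is made
together with the one of the left discrepancy. -/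
def moveRight (s : PairState d k) (e : Fin d × Bool) : PairState d k :=
  if s.Sync e then s
  else ⟨s.left, s.right + signedUnit e, exchange s.right (s.right + signedUnit e) s.rest⟩

/-- The moves of the coupled process: of the left discrepancy, of the right discrepancy, and of
the other particles. -/
abbrev Move (d k : ℕ) := ((Fin d × Bool) ⊕ (Fin d × Bool)) ⊕ (Fin k × Fin d × Bool)

/-- The rate at which the other particles exchange the contents of `p` and `q`. -/
def restRate (s : PairState d k) : (Fin d → ℤ) → (Fin d → ℤ) → ℝ :=
  offSite s.left (offSite s.right fun _ q => exchangeRate s.rest q)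

/-- The rates of the moves of the coupled process. -/
def rate (s : PairState d k) : Move d k → ℝ :=
  Sum.elim (fun _ => 1) fun m => s.restRate (s.rest m.1) (s.rest m.1 + signedUnit m.2)

/-- The outcomes of the moves of the coupled process. -/
def next (s : PairState d k) : Move d k → PairState d k :=
  Sum.elim (Sum.elim s.moveLeft s.moveRight)
    fun m => s.exchangeRest (s.rest m.1) (s.rest m.1 + signedUnit m.2)

lemma restRate_mem_Icc (s : PairState d k) (p q : Fin d → ℤ) : s.restRate p q ∈ Set.Icc 0 1 := by
  unfold restRate offSite
  split_ifs
  · simp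
  · simp
  · exact ⟨exchangeRate_nonneg _ _, exchangeRate_le_one _ _⟩

lemma rate_nonneg (s : PairState d k) (m : Move d k) : 0 ≤ s.rate m := by
  rcases m with _ | _
  · exact zero_le_one
  · exact (s.restRate_mem_Icc _ _).1

lemma rate_le_one (s : PairState d k) (m : Move d k) : s.rate m ≤ 1 := by
  rcases m with _ | _
  · exact le_rfl
  · exact (s.restRate_mem_Icc _ _).2

lemma sum_rate_le (s : PairState d k) : ∑ m, s.rate m ≤ 4 * d + 2 * d * k := by
  refine (Finset.sum_le_sum fun _ _ => s.rate_le_one _).trans_eq ?_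
  simp only [Finset.sum_const, Finset.card_univ, Fintype.card_sum, Fintype.card_prod,
    Fintype.card_fin, Fintype.card_bool, nsmul_eq_mul, mul_one]
  push_cast
  ring

/-- The generator of the coupled process. -/
def gen : Module.End ℝ (PairState d k → ℝ) := jumpGen rate next

lemma gen_apply (F : PairState d k → ℝ) (s : PairState d k) :
    gen F s = ∑ e, ((F (s.moveLeft e) - F s) + (F (s.moveRight e) - F s)) +
      bondSum s.rest (offSite s.left <| offSite s.right fun p q =>
        F (s.exchangeRest p q) - F s) := by
  rw [gen, jumpGen_apply, Fintype.sum_sum_type, Fintype.sum_sum_type, ← Finset.sum_add_distrib]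
  congr 1
  · simp only [rate, next, Sum.elim_inl, Sum.elim_inr, one_mul]
  · rw [Fintype.sum_prod_type, bondSum]
    simp only [rate, next, Sum.elim_inr, restRate, offSite, ite_mul, zero_mul, mul_ite, mul_zero]

lemma gen_eq_gen_swap (F : PairState d k → ℝ) (s : PairState d k) :
    gen F s = gen (fun s => F s.swap) s.swap := by
  have hcomm (H : (Fin d → ℤ) → (Fin d → ℤ) → ℝ) :
      offSite s.left (offSite s.right H) = offSite s.right (offSite s.left H) := by
    funext p q
    simp only [offSite]
    split_ifs <;> rfl
  have hmoves (e : Fin d × Bool) :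
      F (s.moveLeft e) - F s + (F (s.moveRight e) - F s) =
      F (s.swap.moveLeft e).swap - F s.swap.swap +
        (F (s.swap.moveRight e).swap - F s.swap.swap) := by
    by_cases he : s.Sync e
    · simp only [moveLeft, moveRight, if_pos he, if_pos (sync_swap.2 he)]
      rfl
    · simp only [moveLeft, moveRight, if_neg he, if_neg (sync_swap.not.2 he)]
      exact add_comm _ _
  rw [gen_apply, gen_apply, hcomm, Finset.sum_congr rfl fun e _ => hmoves e]
  rfl

lemma IsAdmissible.leftConf_moveLeft {s : PairState d k} (hs : s.IsAdmissible) (e : Fin d × Bool) :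
    (s.moveLeft e).leftConf = exchange s.left (s.left + signedUnit e) s.leftConf := by
  have hcons : exchange s.left (s.left + signedUnit e) s.leftConf =
      Fin.cons (s.left + signedUnit e) (exchange s.left (s.left + signedUnit e) s.rest) := by
    funext l
    cases l using Fin.cases <;> simp [exchange, leftConf]
  rw [hcons]
  by_cases he : s.Sync e
  · rw [moveLeft, if_pos he, exchange_of_notMem hs.left_notMem he.2.1, leftConf]
  · rw [moveLeft, if_neg he, leftConf]

lemma leftConf_exchangeRest {s : PairState d k} {p q : Fin d → ℤ} (hp : p ≠ s.left)
    (hq : q ≠ s.left) : (s.exchangeRest p q).leftConf = exchange p q s.leftConf := by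
  funext l
  cases l using Fin.cases with
  | zero => exact (Equiv.swap_apply_of_ne_of_ne hp.symm hq.symm).symm
  | succ l => rfl

lemma IsAdmissible.right_notMem_range_leftConf {s : PairState d k} (hs : s.IsAdmissible)
    (hne : s.left ≠ s.right) : s.right ∉ Set.range s.leftConf := by
  rw [leftConf, Fin.range_cons]
  exact fun h => h.elim hne.symm hs.right_notMem

lemma IsAdmissible.leftConf_moveRight {s : PairState d k} (hs : s.IsAdmissible)
    (hne : s.left ≠ s.right) (e : Fin d × Bool) :
    (s.moveRight e).leftConf = if s.right + signedUnit e = s.left then s.leftConf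
      else exchange s.right (s.right + signedUnit e) s.leftConf := by
  by_cases he : s.Sync e
  · have hadj : s.right + signedUnit e ≠ s.left := fun h => by
      have hcoord := congrFun h e.1
      rw [he.1, Pi.add_apply, add_eq_left] at hcoord
      cases hb : e.2 <;> simp [signedUnit, hb] at hcoord
    have hempty : s.right + signedUnit e ∉ Set.range s.leftConf := by
      rw [leftConf, Fin.range_cons]
      exact fun h => h.elim hadj he.2.2
    rw [moveRight, if_pos he, if_neg hadj,
      exchange_of_notMem (hs.right_notMem_range_leftConf hne) hempty]
  · rw [moveRight, if_neg he]
    split_ifs with hadj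
    · rw [hadj, exchange_of_notMem hs.right_notMem hs.left_notMem, leftConf, leftConf]
    · exact leftConf_exchangeRest hne.symm hadj

lemma bondSum_leftConf_offSite (s : PairState d k) (H : (Fin d → ℤ) → (Fin d → ℤ) → ℝ) :
    bondSum s.leftConf (offSite s.left H) = bondSum s.rest (offSite s.left H) := by
  have hfirst (q : Fin d → ℤ) : offSite s.left H s.left q = 0 := if_pos (Or.inl rfl)
  rw [bondSum, Fin.sum_univ_succ]
  simp only [leftConf, Fin.cons_zero, Fin.cons_succ, hfirst, mul_zero, Finset.sum_const_zero,
    zero_add]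
  refine Finset.sum_congr rfl fun l _ => Finset.sum_congr rfl fun e _ => ?_
  by_cases he : s.rest l + signedUnit e = s.left
  · simp [offSite, he]
  · simp [exchangeRate, Fin.range_cons, he]

lemma IsAdmissible.gen_comp_leftConf {s : PairState d k} (hs : s.IsAdmissible)
    (hne : s.left ≠ s.right) (w : Conf d (k + 1) → ℝ) :
    gen (fun s => w s.leftConf) s = stirGen w s.leftConf := by
  set H : (Fin d → ℤ) → (Fin d → ℤ) → ℝ := fun p q =>
    w (exchange p q s.leftConf) - w s.leftConf with hH
  have hsymm (p q : Fin d → ℤ) : H p q = H q p := by simp only [hH, exchange_comm]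
  have hright := hs.right_notMem_range_leftConf hne
  have hzero (q : Fin d → ℤ) (hq : q ∉ Set.range s.leftConf) : offSite s.left H s.right q = 0 := by
    simp [offSite, hH, exchange_of_notMem hright hq]
  have hrest : bondSum s.leftConf (offSite s.right (offSite s.left H)) =
      bondSum s.rest (offSite s.left (offSite s.right fun p q =>
        w (s.exchangeRest p q).leftConf - w s.leftConf)) := by
    have hcomm : offSite s.right (offSite s.left H) = offSite s.left (offSite s.right fun p q =>
        w (s.exchangeRest p q).leftConf - w s.leftConf) := by
      funext p q
      simp only [offSite]
      split_ifs with hb ha ha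
      · rfl
      · rfl
      · rfl
      · push Not at ha
        rw [leftConf_exchangeRest ha.1 ha.2]
    rw [hcomm, bondSum_leftConf_offSite]
  rw [stirGen_apply, bondSum_eq_add hs.leftConf_injective hsymm s.left
      fun _ h => (h ⟨0, rfl⟩).elim,
    bondSum_eq_add hs.leftConf_injective (fun p q => by simp only [offSite, or_comm, hsymm p q])
      s.right fun q _ => hzero q, hrest, gen_apply, Finset.sum_add_distrib, add_assoc]
  congr 1
  · simp only [hs.leftConf_moveLeft, hH]
  · congr 1
    refine Finset.sum_congr rfl fun e _ => ?_
    rw [hs.leftConf_moveRight hne, offSite]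
    simp only [hne.symm, false_or]
    split_ifs
    · exact sub_self _
    · rfl

lemma IsAdmissible.gen_comp_rightConf {s : PairState d k} (hs : s.IsAdmissible)
    (hne : s.left ≠ s.right) (w : Conf d (k + 1) → ℝ) :
    gen (fun s => w s.rightConf) s = stirGen w s.rightConf :=
  (gen_eq_gen_swap _ s).trans (hs.swap.gen_comp_leftConf hne.symm w)

lemma IsAdmissible.exchangeRest_of_ne {s : PairState d k} (hs : s.IsAdmissible) (j : Fin k)
    {q : Fin d → ℤ} (hleft : q ≠ s.left) (hright : q ≠ s.right) :
    (s.exchangeRest (s.rest j) q).IsAdmissible where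
  rest_injective := exchange_injective hs.rest_injective _ _
  left_notMem := notMem_range_exchange <| by
    dsimp only [exchangeRest]
    rw [Equiv.swap_apply_of_ne_of_ne (fun h => hs.left_notMem ⟨j, h.symm⟩) hleft.symm]
    exact hs.left_notMem
  right_notMem := notMem_range_exchange <| by
    dsimp only [exchangeRest]
    rw [Equiv.swap_apply_of_ne_of_ne (fun h => hs.right_notMem ⟨j, h.symm⟩) hright.symm]
    exact hs.right_notMem

lemma IsAdmissible.moveLeft {s : PairState d k} (hs : s.IsAdmissible) (hne : s.left ≠ s.right)
    (e : Fin d × Bool) : (s.moveLeft e).IsAdmissible := by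
  rw [PairState.moveLeft]
  split_ifs with he
  · exact ⟨hs.rest_injective, he.2.1, he.2.2⟩
  · refine ⟨exchange_injective hs.rest_injective _ _, notMem_range_exchange ?_,
      notMem_range_exchange ?_⟩
    · rw [Equiv.swap_apply_right]
      exact hs.left_notMem
    · by_cases h : s.right = s.left + signedUnit e
      · rw [h, Equiv.swap_apply_right]
        exact hs.left_notMem
      · rw [Equiv.swap_apply_of_ne_of_ne hne.symm h]
        exact hs.right_notMem

lemma IsAdmissible.moveRight {s : PairState d k} (hs : s.IsAdmissible) (hne : s.left ≠ s.right)
    (e : Fin d × Bool) : (s.moveRight e).IsAdmissible := by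
  by_cases he : s.Sync e
  · rwa [PairState.moveRight, if_pos he]
  · have hswap : s.moveRight e = (s.swap.moveLeft e).swap := by
      rw [PairState.moveRight, PairState.moveLeft, if_neg he, if_neg (sync_swap.not.2 he)]
      rfl
    rw [hswap]
    exact (hs.swap.moveLeft hne.symm e).swap

lemma IsAdmissible.next {s : PairState d k} (hs : s.IsAdmissible) (hne : s.left ≠ s.right)
    {m : Move d k} (hm : s.rate m ≠ 0) : (s.next m).IsAdmissible := by
  rcases m with (e | e) | ⟨j, e⟩
  · exact hs.moveLeft hne e
  · exact hs.moveRight hne e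
  · refine hs.exchangeRest_of_ne j (fun h => hm ?_) fun h => hm ?_ <;>
      simp [rate, restRate, offSite, h]

end PairState

/-! ### The Lyapunov function -/

/-- The increments of the radial part of the Lyapunov function. The power gives it the growth
`n ^ θ` and a drift of order `n ^ (θ - 2)`. The ratio of the geometric term is such that a
collision, of rate at most `4 * d`, turns the drift `-2 * β ^ n` of that term into at most
`-β ^ n`, which dominates bounded errors at bounded distances when `K` is large. -/
def stepWeight (d : ℕ) (θ K : ℝ) (n : ℕ) : ℝ :=
  ((n : ℝ) + 1) ^ (θ - 1) + K * (1 / (2 + 4 * d)) ^ n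

section StepWeight

variable {d : ℕ} {θ K : ℝ}

lemma stepWeight_nonneg (hK : 0 ≤ K) (n : ℕ) : 0 ≤ stepWeight d θ K n := by
  unfold stepWeight
  positivity

lemma antitone_stepWeight (hθ1 : θ ≤ 1) (hK : 0 ≤ K) : Antitone (stepWeight d θ K) := by
  intro m n hmn
  have hratio : 1 / (2 + 4 * (d : ℝ)) ≤ 1 := (div_le_one (by positivity)).2 (by
    linarith [d.cast_nonneg (α := ℝ)])
  refine add_le_add (Real.rpow_le_rpow_of_nonpos (by positivity) ?_ (by linarith)) ?_
  · gcongr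
  · exact mul_le_mul_of_nonneg_left (pow_le_pow_of_le_one (by positivity) hratio hmn) hK

lemma rpow_le_sum_stepWeight (hθ1 : θ ≤ 1) (hK : 0 ≤ K) {n : ℕ} (hn : 0 < n) :
    (n : ℝ) ^ θ ≤ ∑ i ∈ Finset.range n, stepWeight d θ K i := by
  have hn0 : (0 : ℝ) < n := Nat.cast_pos.2 hn
  have hterm (i : ℕ) (hi : i ∈ Finset.range n) : (n : ℝ) ^ (θ - 1) ≤ stepWeight d θ K i := by
    have hin : (i : ℝ) + 1 ≤ n := by exact_mod_cast Finset.mem_range.1 hi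
    exact (Real.rpow_le_rpow_of_nonpos (by positivity) hin (by linarith)).trans
      (le_add_of_nonneg_right (by positivity))
  calc (n : ℝ) ^ θ = ∑ _i ∈ Finset.range n, (n : ℝ) ^ (θ - 1) := by
        rw [Finset.sum_const, Finset.card_range, nsmul_eq_mul, Real.rpow_sub_one hn0.ne',
          mul_div_cancel₀ _ hn0.ne']
    _ ≤ _ := Finset.sum_le_sum hterm

lemma rpow_neg_add_one_le {γ X : ℝ} (hγ0 : 0 ≤ γ) (hγ1 : γ ≤ 1) (hX : 1 ≤ X) :
    (X + 1) ^ (-γ) ≤ X ^ (-γ) - γ / 2 * X ^ (-γ - 1) := by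
  have hX0 : 0 < X := by linarith
  have hratio : 1 + -(1 / (X + 1)) = X / (X + 1) := by field_simp; ring
  have hbernoulli : (X / (X + 1)) ^ γ ≤ 1 + γ * -(1 / (X + 1)) := by
    rw [← hratio]
    refine rpow_one_add_le_one_add_mul_self ?_ hγ0 hγ1
    rw [neg_le_neg_iff, div_le_one (by linarith)]
    linarith
  have hhalf : γ / 2 / X ≤ γ / (X + 1) := by
    rw [div_div]
    gcongr
    linarith
  calc (X + 1) ^ (-γ) = X ^ (-γ) * (X / (X + 1)) ^ γ := by
        rw [Real.div_rpow hX0.le (by linarith), Real.rpow_neg hX0.le, Real.rpow_neg (by linarith)]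
        have := (Real.rpow_pos_of_pos hX0 γ).ne'
        field_simp
    _ ≤ X ^ (-γ) * (1 - γ / 2 / X) := by
        gcongr
        linarith [mul_one_div γ (X + 1)]
    _ = X ^ (-γ) - γ / 2 * X ^ (-γ - 1) := by
        rw [Real.rpow_sub_one hX0.ne']
        ring

lemma exists_div_sq_le_rpow_add_geometric {M β ε : ℝ} (hθ : 0 < θ) (hM : 0 ≤ M) (hβ : 0 < β)
    (hβ1 : β ≤ 1) (hε : 0 < ε) : ∃ K : ℝ, 0 ≤ K ∧ ∀ n : ℕ,
      M / ((n : ℝ) + 1) ^ 2 ≤ ε * ((n : ℝ) + 1) ^ (θ - 2) + K * β ^ n := by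
  have hlim : Filter.Tendsto (fun n : ℕ => M * ((n : ℝ) + 1) ^ (-θ)) Filter.atTop (nhds 0) := by
    simpa using ((tendsto_rpow_neg_atTop hθ).comp
      (Filter.tendsto_atTop_add_const_right _ 1 tendsto_natCast_atTop_atTop)).const_mul M
  obtain ⟨R, hR⟩ := Filter.eventually_atTop.1 (hlim.eventually (gt_mem_nhds hε))
  refine ⟨M / β ^ R, by positivity, fun n => ?_⟩
  have hX : (0 : ℝ) < (n : ℝ) + 1 := by positivity
  rcases le_or_gt R n with hn | hn
  · have hsplit : M / ((n : ℝ) + 1) ^ 2 =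
        M * ((n : ℝ) + 1) ^ (-θ) * ((n : ℝ) + 1) ^ (θ - 2) := by
      rw [mul_assoc, ← Real.rpow_add hX, div_eq_mul_inv, ← Real.rpow_natCast, ← Real.rpow_neg hX.le]
      congr 2
      push_cast
      ring
    rw [hsplit]
    refine (mul_le_mul_of_nonneg_right (hR n hn).le (by positivity)).trans ?_
    exact le_add_of_nonneg_right (by positivity)
  · calc M / ((n : ℝ) + 1) ^ 2 ≤ M :=
          div_le_self hM (one_le_pow₀ (by linarith [n.cast_nonneg (α := ℝ)]))
      _ = M / β ^ R * β ^ R := by field_simp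
      _ ≤ M / β ^ R * β ^ n := by
          gcongr ?_ * ?_
          exact pow_le_pow_of_le_one hβ.le hβ1 hn.le
      _ ≤ _ := le_add_of_nonneg_left (by positivity)

/-- Here `c` stands for the indicator of a collision and `M / (n + 1) ^ 2` for the drift of the
corrections that compensate the collisions. -/
lemma exists_stepWeight_drift_le (d : ℕ) {M : ℝ} (hθ0 : 0 < θ) (hθ1 : θ < 1) (hM : 0 ≤ M) :
    ∃ K : ℝ, 0 ≤ K ∧ ∀ (n : ℕ) (c : ℝ), 0 ≤ c → c ≤ 1 →
      2 * (stepWeight d θ K (n + 1) - stepWeight d θ K n) +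
        4 * d * ((stepWeight d θ K (n + 1) - 1) * c) + M / ((n : ℝ) + 1) ^ 2 ≤
      -((1 - θ) / 2 * ((n : ℝ) + 1) ^ (θ - 2)) := by
  set β : ℝ := 1 / (2 + 4 * d) with hβ
  have hβ0 : 0 < β := by positivity
  have hβ1 : β ≤ 1 := (div_le_one (by positivity)).2 (by linarith [d.cast_nonneg (α := ℝ)])
  obtain ⟨K, hK, herror⟩ := exists_div_sq_le_rpow_add_geometric hθ0 hM hβ0 hβ1
    (show 0 < (1 - θ) / 2 by linarith)
  refine ⟨K, hK, fun n c hc0 hc1 => ?_⟩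
  have hX : (1 : ℝ) ≤ (n : ℝ) + 1 := by linarith [n.cast_nonneg (α := ℝ)]
  have hpower := rpow_neg_add_one_le (sub_nonneg.2 hθ1.le) (by linarith) hX
  have hle_one : ((n : ℝ) + 1 + 1) ^ (θ - 1) ≤ 1 :=
    Real.rpow_le_one_of_one_le_of_nonpos (by linarith) (by linarith)
  have hgeom : K * β ^ (n + 1) * (2 + 4 * d) = K * β ^ n := by
    rw [pow_succ, hβ]
    field_simp
  have hcollision : 4 * d * ((stepWeight d θ K (n + 1) - 1) * c) ≤
      4 * d * (K * β ^ (n + 1)) := by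
    refine mul_le_mul_of_nonneg_left ?_ (by positivity)
    refine (mul_le_mul_of_nonneg_right ?_ hc0).trans (mul_le_of_le_one_right (by positivity) hc1)
    rw [stepWeight, ← hβ]
    push_cast
    linarith
  rw [show -(1 - θ) - 1 = θ - 2 by ring, neg_sub] at hpower
  have herror := herror n
  simp only [stepWeight, ← hβ] at hcollision ⊢
  push_cast at hcollision ⊢
  linarith

end StepWeight

namespace PairState

variable {d k : ℕ}

lemma IsAdmissible.gen_comp_left_sub {s : PairState d k} (hs : s.IsAdmissible)
    (hne : s.left ≠ s.right) {g : (Fin d → ℤ) → ℝ} (hg : ∀ z, g (-z) = g z) (l : Fin k) :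
    gen (fun s => g (s.left - s.rest l)) s = 2 * puncturedLaplacian g (s.left - s.rest l) :=
  (hs.gen_comp_leftConf hne fun x => g (x 0 - x l.succ)).trans <|
    stirGen_comp_sub hs.leftConf_injective hg (Fin.succ_ne_zero l).symm

lemma gen_comp_gap (G : (Fin d → ℤ) → ℝ) (s : PairState d k) :
    gen (fun s => G s.gap) s = ∑ e, if s.Sync e then 0 else
      G (s.gap + signedUnit e) + G (s.gap + signedUnit (opposite e)) - 2 * G s.gap := by
  have hrest : bondSum s.rest (offSite s.left <| offSite s.right fun p q =>
      G (s.exchangeRest p q).gap - G s.gap) = 0 := by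
    simp [bondSum, offSite, exchangeRest, gap]
  rw [gen_apply, hrest, add_zero]
  refine Finset.sum_congr rfl fun e _ => ?_
  split_ifs with he
  · simp [moveLeft, moveRight, he, gap]
  · have hleft : s.left + signedUnit e - s.right = s.gap + signedUnit e := by
      rw [gap, sub_add_eq_add_sub]
    have hright : s.left - (s.right + signedUnit e) = s.gap + signedUnit (opposite e) := by
      rw [gap, signedUnit_opposite, sub_add_eq_sub_sub, ← sub_eq_add_neg]
    rw [moveLeft, moveRight, if_neg he, if_neg he, ← hleft, ← hright]
    simp only [gap]
    ring

lemma gen_sqNorm_gap_le (s : PairState d k) : gen (fun s => sqNorm s.gap) s ≤ 4 * d := by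
  rw [gen_comp_gap sqNorm]
  refine (Finset.sum_le_card_nsmul _ _ 2 fun e _ => ?_).trans_eq ?_
  · rw [sqNorm_add_add_sqNorm_add_opposite, add_sub_cancel_left]
    split_ifs <;> norm_num
  · simp only [Finset.card_univ, Fintype.card_prod, Fintype.card_fin, Fintype.card_bool,
      nsmul_eq_mul]
    push_cast
    ring

/-- The indicator that one of the discrepancies is adjacent to another particle. -/
def collision (s : PairState d k) : ℝ :=
  if ∃ e, s.left + signedUnit e ∈ Set.range s.rest ∨ s.right + signedUnit e ∈ Set.range s.rest
  then 1 else 0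

lemma collision_nonneg (s : PairState d k) : 0 ≤ s.collision := by
  unfold collision
  split_ifs <;> norm_num

lemma collision_le_one (s : PairState d k) : s.collision ≤ 1 := by
  unfold collision
  split_ifs <;> norm_num

lemma collision_eq_one_of_not_sync {s : PairState d k} {e : Fin d × Bool}
    (h : s.gap e.1 = 0) (he : ¬ s.Sync e) : s.collision = 1 := by
  refine if_pos ⟨e, ?_⟩
  by_contra! hfree
  exact he ⟨sub_eq_zero.1 h, hfree.1, hfree.2⟩

/-- The indicator that two sites are nearest neighbours. -/
def adjacency (p q : Fin d → ℤ) : ℝ := if ∃ e, p + signedUnit e = q then 1 else 0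

lemma adjacency_nonneg (p q : Fin d → ℤ) : 0 ≤ adjacency p q := by
  unfold adjacency
  split_ifs <;> norm_num

lemma collision_le_sum_adjacency (s : PairState d k) :
    s.collision ≤ ∑ l, (adjacency s.left (s.rest l) + adjacency s.right (s.rest l)) := by
  have hterm (l : Fin k) : 0 ≤ adjacency s.left (s.rest l) + adjacency s.right (s.rest l) :=
    add_nonneg (adjacency_nonneg _ _) (adjacency_nonneg _ _)
  unfold collision
  split_ifs with h
  · obtain ⟨e, ⟨l, hl⟩ | ⟨l, hl⟩⟩ := h <;>
      refine le_trans ?_ (Finset.single_le_sum (fun l _ => hterm l) (Finset.mem_univ l))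
    · exact (if_pos ⟨e, hl.symm⟩ : adjacency s.left (s.rest l) = 1).ge.trans
        (le_add_of_nonneg_right (adjacency_nonneg _ _))
    · exact (if_pos ⟨e, hl.symm⟩ : adjacency s.right (s.rest l) = 1).ge.trans
        (le_add_of_nonneg_left (adjacency_nonneg _ _))
  · exact Finset.sum_nonneg fun l _ => hterm l

section Profile

variable {δ : ℕ → ℝ}

lemma profile_increment_le (hδ : ∀ n, 0 ≤ δ n) (hanti : Antitone δ) {s : PairState d k} {n : ℕ}
    (hn : l1Norm s.gap = n + 1) {j : Fin d} (hj : s.gap j ≠ 0) (e : Fin d × Bool) :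
    (if s.Sync e then 0 else
      ∑ i ∈ Finset.range (l1Norm (s.gap + signedUnit e)), δ i +
        ∑ i ∈ Finset.range (l1Norm (s.gap + signedUnit (opposite e))), δ i -
        2 * ∑ i ∈ Finset.range (l1Norm s.gap), δ i) ≤
      (if e.1 = j then δ (n + 1) - δ n else 0) + 2 * δ (n + 1) * s.collision := by
  have hstep : δ (n + 1) - δ n ≤ 0 := sub_nonpos.2 (hanti n.le_succ)
  have hcollision : 0 ≤ 2 * δ (n + 1) * s.collision :=
    mul_nonneg (mul_nonneg zero_le_two (hδ _)) s.collision_nonneg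
  by_cases hgap : s.gap e.1 = 0
  · rw [if_neg (fun h : e.1 = j => hj (h ▸ hgap)), zero_add]
    split_ifs with he
    · exact hcollision
    · rw [l1Norm_add_signedUnit_of_eq_zero hgap,
        l1Norm_add_signedUnit_of_eq_zero ((congrArg s.gap (opposite_fst e)).trans hgap), hn,
        Finset.sum_range_succ _ (n + 1), collision_eq_one_of_not_sync hgap he]
      linarith
  · rw [if_neg fun he : s.Sync e => hgap (sub_eq_zero.2 he.1),
      comp_l1Norm_add_add_comp_l1Norm_add_opposite
        (fun m => ∑ i ∈ Finset.range m, δ i) hgap hn, hn]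
    simp only [Finset.sum_range_succ]
    split_ifs <;> linarith

lemma gen_profile_gap_le (hδ : ∀ n, 0 ≤ δ n) (hanti : Antitone δ) {s : PairState d k} {n : ℕ}
    (hn : l1Norm s.gap = n + 1) :
    gen (fun s => ∑ i ∈ Finset.range (l1Norm s.gap), δ i) s ≤
      2 * (δ (n + 1) - δ n) + 4 * d * (δ (n + 1) * s.collision) := by
  obtain ⟨j, hj⟩ : ∃ j, s.gap j ≠ 0 := by
    by_contra! h
    simp [l1Norm, h] at hn
  rw [gen_comp_gap fun z => ∑ i ∈ Finset.range (l1Norm z), δ i]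
  refine (Finset.sum_le_sum fun e _ => profile_increment_le hδ hanti hn hj e).trans_eq ?_
  rw [Finset.sum_add_distrib, Fintype.sum_prod_type, Finset.sum_comm]
  simp only [Finset.sum_ite_eq', Finset.mem_univ, if_true, Finset.sum_const, Finset.card_univ,
    Fintype.card_prod, Fintype.card_fin, Fintype.card_bool, nsmul_eq_mul]
  push_cast
  ring

end Profile

section Lyapunov

variable {i j : Fin d} {θ K : ℝ}

/-- The part of the Lyapunov function which compensates the collisions of the left discrepancy
with the particle `l`. -/
def leftCorrection (i j : Fin d) (l : Fin k) (s : PairState d k) : ℝ :=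
  Real.log (planarWeight i j (s.left - s.rest l) + sqNorm s.gap) -
    Real.log (planarWeight i j (s.left - s.rest l))

lemma leftCorrection_nonneg (i j : Fin d) (l : Fin k) (s : PairState d k) :
    0 ≤ leftCorrection i j l s := by
  have hq := one_le_planarWeight i j (s.left - s.rest l)
  exact sub_nonneg.2 <| Real.log_le_log (by linarith) (le_add_of_nonneg_right (sqNorm_nonneg _))

lemma leftCorrection_le_one (l : Fin k) {s : PairState d k} (h : sqNorm s.gap ≤ 1) :
    leftCorrection i j l s ≤ 1 := by
  have hq := one_le_planarWeight i j (s.left - s.rest l)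
  have hr := sqNorm_nonneg s.gap
  rw [leftCorrection, ← Real.log_div (by positivity) (by positivity)]
  refine (Real.log_le_sub_one_of_pos (by positivity)).trans ?_
  rw [sub_le_iff_le_add, div_le_iff₀ (by positivity)]
  linarith

lemma IsAdmissible.gen_log_planarWeight_add_le {s : PairState d k} (hs : s.IsAdmissible)
    (hne : s.left ≠ s.right) (hij : i ≠ j) (l : Fin k) :
    gen (fun s => Real.log (planarWeight i j (s.left - s.rest l) + sqNorm s.gap)) s ≤
      (8 + 8 * d) / sqNorm s.gap := by
  have hq (s : PairState d k) : 0 < planarWeight i j (s.left - s.rest l) + sqNorm s.gap :=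
    add_pos_of_pos_of_nonneg (by linarith [one_le_planarWeight i j (s.left - s.rest l)])
      (sqNorm_nonneg _)
  set W : PairState d k → ℝ := fun s => planarWeight i j (s.left - s.rest l)
  set N : PairState d k → ℝ := fun s => sqNorm s.gap
  have hlinear : gen (W + N) s ≤ 8 + 8 * d := by
    have hW := (hs.gen_comp_left_sub hne (planarWeight_neg i j) l).le.trans
      (mul_le_mul_of_nonneg_left (puncturedLaplacian_planarWeight_le hij _) zero_le_two)
    rw [Fintype.card_fin] at hW
    rw [map_add, Pi.add_apply]
    linarith [gen_sqNorm_gap_le s]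
  have hconcave : gen (fun s => Real.log (W s + N s)) s ≤ gen ((W s + N s)⁻¹ • (W + N)) s := by
    refine jumpGen_mono s.rate_nonneg fun m _ => ?_
    rw [← Real.log_div (hq _).ne' (hq s).ne', Pi.smul_apply, Pi.smul_apply, smul_eq_mul,
      smul_eq_mul, Pi.add_apply, Pi.add_apply, inv_mul_cancel₀ (hq s).ne', ← div_eq_inv_mul]
    exact Real.log_le_sub_one_of_pos (div_pos (hq _) (hq s))
  calc gen (fun s => Real.log (W s + N s)) s ≤ gen (W + N) s / (W s + N s) := by
        rwa [map_smul, Pi.smul_apply, smul_eq_mul, ← div_eq_inv_mul] at hconcave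
    _ ≤ (8 + 8 * d) / (W s + N s) := div_le_div_of_nonneg_right hlinear (hq s).le
    _ ≤ (8 + 8 * d) / N s := by
        refine div_le_div_of_nonneg_left (by positivity) (sqNorm_pos (sub_ne_zero.2 hne)) ?_
        exact le_add_of_nonneg_left (zero_le_one.trans (one_le_planarWeight _ _ _))

lemma IsAdmissible.adjacency_le_gen_log_planarWeight {s : PairState d k} (hs : s.IsAdmissible)
    (hne : s.left ≠ s.right) (hij : i ≠ j) (l : Fin k) :
    adjacency s.left (s.rest l) ≤
      gen (fun s => Real.log (planarWeight i j (s.left - s.rest l))) s := by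
  have hmin : Real.log (planarWeight i j 0) ≤
      Real.log (planarWeight i j (s.left - s.rest l)) := by
    simpa [planarWeight] using Real.log_nonneg (one_le_planarWeight i j (s.left - s.rest l))
  have hle := laplacian_le_puncturedLaplacian (g := fun z => Real.log (planarWeight i j z)) hmin
  rw [hs.gen_comp_left_sub hne (g := fun z => Real.log (planarWeight i j z))
    (fun z => by rw [planarWeight_neg]) l]
  unfold adjacency
  split_ifs with hadj
  · obtain ⟨e, he⟩ := hadj
    have hunit : s.left - s.rest l = -signedUnit e := by rw [← he, sub_add_cancel_left]
    have hweight : planarWeight i j (s.left - s.rest l) ≤ 2 := by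
      rw [hunit, planarWeight_neg]
      exact planarWeight_signedUnit_le hij e
    linarith [half_le_laplacian_log_planarWeight hij hweight]
  · linarith [laplacian_log_planarWeight_nonneg hij (s.left - s.rest l)]

lemma IsAdmissible.gen_leftCorrection_le {s : PairState d k} (hs : s.IsAdmissible)
    (hne : s.left ≠ s.right) (hij : i ≠ j) (l : Fin k) :
    gen (leftCorrection i j l) s ≤
      (8 + 8 * d) / sqNorm s.gap - adjacency s.left (s.rest l) := by
  have hsub : leftCorrection i j l =
      (fun s => Real.log (planarWeight i j (s.left - s.rest l) + sqNorm s.gap)) -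
        fun s : PairState d k => Real.log (planarWeight i j (s.left - s.rest l)) := rfl
  rw [hsub, map_sub, Pi.sub_apply]
  exact sub_le_sub (hs.gen_log_planarWeight_add_le hne hij l)
    (hs.adjacency_le_gen_log_planarWeight hne hij l)

/-- The part of the Lyapunov function which compensates all collisions. -/
def correction (i j : Fin d) (s : PairState d k) : ℝ :=
  ∑ l, (leftCorrection i j l s + leftCorrection i j l s.swap)

lemma sqNorm_gap_swap (s : PairState d k) : sqNorm s.swap.gap = sqNorm s.gap := by
  rw [← sqNorm_neg]
  exact congrArg sqNorm (neg_sub _ _)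

lemma correction_nonneg (i j : Fin d) (s : PairState d k) : 0 ≤ correction i j s :=
  Finset.sum_nonneg fun _ _ =>
    add_nonneg (leftCorrection_nonneg _ _ _ _) (leftCorrection_nonneg _ _ _ _)

lemma correction_le {s : PairState d k} (h : sqNorm s.gap ≤ 1) : correction i j s ≤ 2 * k := by
  refine (Finset.sum_le_card_nsmul _ _ 2 fun l _ => ?_).trans_eq ?_
  · linarith [leftCorrection_le_one (i := i) (j := j) l h,
      leftCorrection_le_one (i := i) (j := j) l (s.sqNorm_gap_swap.trans_le h)]
  · simp [mul_comm]

lemma IsAdmissible.gen_correction_le {s : PairState d k} (hs : s.IsAdmissible)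
    (hne : s.left ≠ s.right) (hij : i ≠ j) :
    gen (correction i j) s ≤ 2 * k * ((8 + 8 * d) / sqNorm s.gap) - s.collision := by
  have hsum : correction i j = ∑ l, (leftCorrection i j l +
      fun s : PairState d k => leftCorrection i j l s.swap) := by
    funext s
    simp only [correction, Finset.sum_apply, Pi.add_apply]
  have hterm (l : Fin k) :
      gen (leftCorrection i j l + fun s : PairState d k => leftCorrection i j l s.swap) s ≤
        2 * ((8 + 8 * d) / sqNorm s.gap) -
          (adjacency s.left (s.rest l) + adjacency s.right (s.rest l)) := by
    have hleft := hs.gen_leftCorrection_le hne hij l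
    have hright := hs.swap.gen_leftCorrection_le hne.symm hij l
    rw [s.sqNorm_gap_swap] at hright
    rw [map_add, Pi.add_apply, gen_eq_gen_swap fun s => leftCorrection i j l s.swap]
    exact (add_le_add hleft hright).trans_eq (by simp only [PairState.swap]; ring)
  rw [hsum, map_sum, Finset.sum_apply]
  refine (Finset.sum_le_sum fun l _ => hterm l).trans ?_
  rw [Finset.sum_sub_distrib, Finset.sum_const, Finset.card_univ, Fintype.card_fin, nsmul_eq_mul]
  linarith [s.collision_le_sum_adjacency]

/-- A function of the coupled process which has a negative drift until the discrepancies meet. -/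
def lyapunov (i j : Fin d) (θ K : ℝ) (s : PairState d k) : ℝ :=
  ∑ n ∈ Finset.range (l1Norm s.gap), stepWeight d θ K n + 4 * d * correction i j s

lemma rpow_l1Norm_gap_le_lyapunov (hθ1 : θ ≤ 1) (hK : 0 ≤ K) {s : PairState d k}
    (hne : s.left ≠ s.right) : (l1Norm s.gap : ℝ) ^ θ ≤ lyapunov i j θ K s :=
  (rpow_le_sum_stepWeight hθ1 hK (l1Norm_pos (sub_ne_zero.2 hne))).trans <|
    le_add_of_nonneg_right <| mul_nonneg (by positivity) (correction_nonneg i j s)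

lemma lyapunov_nonneg (hK : 0 ≤ K) (s : PairState d k) : 0 ≤ lyapunov i j θ K s :=
  add_nonneg (Finset.sum_nonneg fun n _ => stepWeight_nonneg hK n)
    (mul_nonneg (by positivity) (correction_nonneg i j s))

lemma one_le_lyapunov (hθ0 : 0 ≤ θ) (hθ1 : θ ≤ 1) (hK : 0 ≤ K) {s : PairState d k}
    (hne : s.left ≠ s.right) : 1 ≤ lyapunov i j θ K s := by
  refine le_trans ?_ (rpow_l1Norm_gap_le_lyapunov hθ1 hK hne)
  exact Real.one_le_rpow (Nat.one_le_cast.2 (l1Norm_pos (sub_ne_zero.2 hne))) hθ0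

lemma lyapunov_le_of_gap_eq_signedUnit {s : PairState d k} {e : Fin d × Bool}
    (h : s.gap = signedUnit e) : lyapunov i j θ K s ≤ 1 + K + 8 * d * k := by
  have hl1 : l1Norm s.gap = 1 := by
    simpa [l1Norm, h] using l1Norm_add_signedUnit_of_eq_zero (r := 0) (e := e) rfl
  have hcorrection := correction_le (i := i) (j := j) (h ▸ sqNorm_signedUnit e).le
  rw [lyapunov, hl1, Finset.sum_range_one, stepWeight]
  norm_num
  nlinarith [d.cast_nonneg (α := ℝ)]

lemma IsAdmissible.gen_lyapunov_le {s : PairState d k} (hs : s.IsAdmissible)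
    (hne : s.left ≠ s.right) (hij : i ≠ j) (hθ1 : θ ≤ 1) (hK : 0 ≤ K) {n : ℕ}
    (hn : l1Norm s.gap = n + 1) :
    gen (lyapunov i j θ K) s ≤
      2 * (stepWeight d θ K (n + 1) - stepWeight d θ K n) +
        4 * d * ((stepWeight d θ K (n + 1) - 1) * s.collision) +
        8 * d * k * ((8 + 8 * d) * d) / ((n : ℝ) + 1) ^ 2 := by
  have hsplit : lyapunov i j θ K =
      (fun s : PairState d k => ∑ n ∈ Finset.range (l1Norm s.gap), stepWeight d θ K n) +
        (4 * (d : ℝ)) • correction i j := rfl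
  have hprofile := gen_profile_gap_le (δ := stepWeight d θ K) (stepWeight_nonneg hK)
    (antitone_stepWeight hθ1 hK) hn
  have hcorrection := mul_le_mul_of_nonneg_left (hs.gen_correction_le hne hij)
    (show (0 : ℝ) ≤ 4 * d by positivity)
  have hnorm : (8 + 8 * d : ℝ) / sqNorm s.gap ≤ (8 + 8 * d) * d / ((n : ℝ) + 1) ^ 2 := by
    have hpos : 0 < sqNorm s.gap := sqNorm_pos (sub_ne_zero.2 hne)
    have hl1 := sq_l1Norm_le s.gap
    rw [hn, Fintype.card_fin] at hl1
    push_cast at hl1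
    rw [div_le_div_iff₀ hpos (by positivity), mul_assoc]
    gcongr
  rw [hsplit, map_add, map_smul, Pi.add_apply, Pi.smul_apply, smul_eq_mul]
  calc _ ≤ _ := add_le_add hprofile hcorrection
    _ = 2 * (stepWeight d θ K (n + 1) - stepWeight d θ K n) +
        4 * d * ((stepWeight d θ K (n + 1) - 1) * s.collision) +
        8 * d * k * ((8 + 8 * d) / sqNorm s.gap) := by ring
    _ ≤ _ := by
        rw [mul_div_assoc]
        gcongr

theorem exists_gen_lyapunov_le (k : ℕ) (hij : i ≠ j) (hθ0 : 0 < θ) (hθ1 : θ < 1) :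
    ∃ K : ℝ, 0 ≤ K ∧ ∀ s : PairState d k, s.IsAdmissible → s.left ≠ s.right →
      gen (lyapunov i j θ K) s ≤
        -((1 - θ) / 2 * lyapunov i j θ K s ^ (1 - 1 / (θ / 2))) := by
  obtain ⟨K, hK, hdrift⟩ := exists_stepWeight_drift_le d hθ0 hθ1
    (show (0 : ℝ) ≤ 8 * d * k * ((8 + 8 * d) * d) by positivity)
  refine ⟨K, hK, fun s hs hne => ?_⟩
  have hpos : 0 < l1Norm s.gap := l1Norm_pos (sub_ne_zero.2 hne)
  obtain ⟨n, hn⟩ : ∃ n, l1Norm s.gap = n + 1 := Nat.exists_eq_add_of_le' hpos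
  have hl1 : (l1Norm s.gap : ℝ) = n + 1 := by rw [hn, Nat.cast_succ]
  have hexp : 1 - 1 / (θ / 2) ≤ 0 := sub_nonpos.2 ((one_le_div (by linarith)).2 (by linarith))
  have hpower : lyapunov i j θ K s ^ (1 - 1 / (θ / 2)) ≤ ((n : ℝ) + 1) ^ (θ - 2) := by
    calc lyapunov i j θ K s ^ (1 - 1 / (θ / 2))
        ≤ ((l1Norm s.gap : ℝ) ^ θ) ^ (1 - 1 / (θ / 2)) :=
          Real.rpow_le_rpow_of_nonpos (by positivity)
            (rpow_l1Norm_gap_le_lyapunov hθ1.le hK hne) hexp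
      _ = ((n : ℝ) + 1) ^ (θ - 2) := by
          rw [← Real.rpow_mul (by positivity), hl1]
          congr 1
          field_simp
  calc gen (lyapunov i j θ K) s ≤ _ := hs.gen_lyapunov_le hne hij hθ1.le hK hn
    _ ≤ -((1 - θ) / 2 * ((n : ℝ) + 1) ^ (θ - 2)) :=
        hdrift n _ s.collision_nonneg s.collision_le_one
    _ ≤ _ := by
        gcongr

end Lyapunov

end PairState

/-! ### Decay of the total variation distance -/

section TotalVariation

variable {d k : ℕ}

lemma sum_exchangeRate_le (x : Conf d k) :
    ∑ m : Fin k × Fin d × Bool, exchangeRate x (x m.1 + signedUnit m.2) ≤ 2 * d * k := by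
  refine (Finset.sum_le_sum fun _ _ => exchangeRate_le_one _ _).trans_eq ?_
  simp only [Finset.sum_const, Finset.card_univ, Fintype.card_prod, Fintype.card_fin,
    Fintype.card_bool, nsmul_eq_mul, mul_one]
  push_cast
  ring

lemma PairState.IsAdmissible.uniformized_stirGen_sub {s : PairState d k} (hs : s.IsAdmissible)
    (hne : s.left ≠ s.right) (Λ : ℝ) (w : Conf d (k + 1) → ℝ) :
    uniformized Λ stirGen w s.leftConf - uniformized Λ stirGen w s.rightConf =
      uniformized Λ gen (fun s => w s.leftConf - w s.rightConf) s := by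
  have hgen : gen (fun s => w s.leftConf - w s.rightConf) s =
      stirGen w s.leftConf - stirGen w s.rightConf := by
    rw [← hs.gen_comp_leftConf hne w, ← hs.gen_comp_rightConf hne w, ← Pi.sub_apply, ← map_sub]
    rfl
  rw [uniformized_apply, uniformized_apply, uniformized_apply, hgen]
  ring

lemma PairState.exists_abs_uniformized_pow_sub_le (k : ℕ) {i j : Fin d} {θ Λ : ℝ} (hij : i ≠ j)
    (hθ0 : 0 < θ) (hθ1 : θ < 1) (hΛ0 : 0 < Λ) (hΛ : 4 * d + 2 * d * k ≤ Λ) :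
    ∃ M : ℝ, 0 < M ∧ ∀ u : Conf d (k + 1) → ℝ, (∀ x, |u x| ≤ 1) →
      ∀ s : PairState d k, s.IsAdmissible → ∀ e, s.gap = signedUnit e → ∀ m : ℕ,
      |(uniformized Λ stirGen ^ m) u s.leftConf - (uniformized Λ stirGen ^ m) u s.rightConf| ≤
        M * ((m : ℝ) + 1) ^ (-(θ / 2)) := by
  obtain ⟨K, hK, hdrift⟩ := exists_gen_lyapunov_le k hij hθ0 hθ1
  refine ⟨2 * (max 1 (Λ / ((1 - θ) / 2)) * (1 + K + 8 * d * k)), by positivity,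
    fun u hu s hs e he m => ?_⟩
  set D : ℕ → PairState d k → ℝ := fun m s =>
    (uniformized Λ stirGen ^ m) u s.leftConf - (uniformized Λ stirGen ^ m) u s.rightConf
  have hinitial (s : PairState d k) : |D 0 s| ≤ 2 := by
    have habs := abs_sub (u s.leftConf) (u s.rightConf)
    simp only [D, pow_zero, Module.End.one_apply]
    linarith [hu s.leftConf, hu s.rightConf]
  have hmeet (m : ℕ) (s : PairState d k) (h : s.left = s.right) : D m s = 0 := by
    simp only [D, leftConf, rightConf, h, sub_self]
  have hstep (m : ℕ) (s : PairState d k) (hs : s.IsAdmissible) (hne : s.left ≠ s.right) :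
      D (m + 1) s = uniformized Λ gen (D m) s := by
    simp only [D, pow_succ', Module.End.mul_apply, hs.uniformized_stirGen_sub hne]
  have hbound := abs_le_min_of_drift (V := {s : PairState d k | s.IsAdmissible})
    (Z := {s | s.left = s.right}) D hΛ0 rate_nonneg (fun s => s.sum_rate_le.trans hΛ)
    (fun s hs _ => hs.1.next hs.2) (half_pos hθ0) (by linarith) (half_pos (sub_pos.2 hθ1))
    (fun s _ => lyapunov_nonneg hK s) (fun s hs => one_le_lyapunov hθ0.le hθ1.le hK hs.2)
    (fun s hs => hdrift s hs.1 hs.2) (fun s _ => hinitial s) (fun m s hs => hmeet m s hs.2)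
    (fun m s hs => hstep m s hs.1 hs.2) m hs
  refine (hbound.trans (mul_le_mul_of_nonneg_left (min_le_right _ _) zero_le_two)).trans ?_
  rw [← mul_assoc]
  gcongr
  exact lyapunov_le_of_gap_eq_signedUnit he

variable {Λ t p : ℝ}

lemma abs_sum_smul_deltaFn_le {α : Type*} (T : Finset α) {σ : α → ℝ} (hσ : ∀ z, |σ z| ≤ 1)
    (y : α) : |(∑ z ∈ T, σ z • deltaFn z) y| ≤ 1 := by
  have hvalue : (∑ z ∈ T, σ z • deltaFn z) y = if y ∈ T then σ y else 0 := by
    simp [deltaFn]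
  rw [hvalue]
  split_ifs
  · exact hσ y
  · simp

lemma exists_hasSum_exp_stirGen (hΛ0 : 0 < Λ) (hΛ : 2 * d * k ≤ Λ) (t : ℝ) {u : Conf d k → ℝ}
    (hu : ∀ x, |u x| ≤ 1) :
    ∃ v : Conf d k → ℝ, ∀ x,
      HasSum (fun n : ℕ => t ^ n / (n.factorial : ℝ) * (stirGen ^ n) u x) (v x) ∧
      HasSum (fun n : ℕ => Real.exp (-(Λ * t)) * ((Λ * t) ^ n / (n.factorial : ℝ) *
        (uniformized Λ stirGen ^ n) u x)) (v x) :=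
  exists_hasSum_exp_jumpGen hΛ0 (fun x _ => exchangeRate_nonneg x _)
    (fun x => (sum_exchangeRate_le x).trans hΛ) hu t

lemma hasSum_ptl (hΛ0 : 0 < Λ) (hΛ : 2 * d * k ≤ Λ) (t : ℝ) {x : Conf d k}
    (hx : Function.Injective x) (z : Conf d k) :
    HasSum (fun n : ℕ => t ^ n / (n.factorial : ℝ) * (stirGen ^ n) (deltaFn z) x)
      (ptl t x z) := by
  have hdelta (y : Conf d k) : |deltaFn z y| ≤ 1 := by
    simpa using abs_sum_smul_deltaFn_le {z} (σ := 1) (by simp) y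
  obtain ⟨v, hv⟩ := exists_hasSum_exp_stirGen hΛ0 hΛ t hdelta
  have hptl : ptl t x z = ∑' n : ℕ, t ^ n / (n.factorial : ℝ) * (stirGen ^ n) (deltaFn z) x :=
    tsum_congr fun n => by rw [Lexc_iterate_eq_stirGen_pow _ n hx]
  rw [hptl]
  exact (hv x).1.summable.hasSum

lemma hasSum_poisson_sum_mul_ptl (hΛ0 : 0 < Λ) (hΛ : 2 * d * k ≤ Λ) (t : ℝ) {x : Conf d k}
    (hx : Function.Injective x) (T : Finset (Conf d k)) {σ : Conf d k → ℝ}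
    (hσ : ∀ z, |σ z| ≤ 1) :
    HasSum (fun n : ℕ => Real.exp (-(Λ * t)) * ((Λ * t) ^ n / (n.factorial : ℝ) *
      (uniformized Λ stirGen ^ n) (∑ z ∈ T, σ z • deltaFn z) x)) (∑ z ∈ T, σ z * ptl t x z) := by
  obtain ⟨v, hv⟩ := exists_hasSum_exp_stirGen hΛ0 hΛ t (abs_sum_smul_deltaFn_le T hσ)
  have hterm (n : ℕ) :
      t ^ n / (n.factorial : ℝ) * (stirGen ^ n) (∑ z ∈ T, σ z • deltaFn z) x =
        ∑ z ∈ T, σ z * (t ^ n / (n.factorial : ℝ) * (stirGen ^ n) (deltaFn z) x) := by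
    simp only [map_sum, map_smul, Finset.sum_apply, Pi.smul_apply, smul_eq_mul, Finset.mul_sum,
      mul_left_comm]
  have hlinear := hasSum_sum fun z (_ : z ∈ T) => (hasSum_ptl hΛ0 hΛ t hx z).mul_left (σ z)
  simp only [← hterm] at hlinear
  rw [hlinear.unique (hv x).1]
  exact (hv x).2

lemma sum_abs_ptl_sub_le {M : ℝ} (hΛ0 : 0 < Λ) (hΛ : 2 * d * k ≤ Λ) (hp : 0 ≤ p) (hp1 : p ≤ 1)
    (ht : 0 ≤ t) {x x' : Conf d k} (hx : Function.Injective x) (hx' : Function.Injective x')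
    (hM : ∀ u : Conf d k → ℝ, (∀ y, |u y| ≤ 1) → ∀ m : ℕ,
      |(uniformized Λ stirGen ^ m) u x - (uniformized Λ stirGen ^ m) u x'| ≤
        M * ((m : ℝ) + 1) ^ (-p))
    (T : Finset (Conf d k)) :
    ∑ z ∈ T, |ptl t x z - ptl t x' z| ≤ 3 * M * (1 + Λ * t) ^ (-p) := by
  set σ : Conf d k → ℝ := fun z => (SignType.sign (ptl t x z - ptl t x' z) : ℝ)
  have hσ (z : Conf d k) : |σ z| ≤ 1 := by
    simp only [σ]
    rcases SignType.sign (ptl t x z - ptl t x' z) <;> simp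
  have hsum := (hasSum_poisson_sum_mul_ptl hΛ0 hΛ t hx T hσ).sub
    (hasSum_poisson_sum_mul_ptl hΛ0 hΛ t hx' T hσ)
  simp only [← mul_sub, ← Finset.sum_sub_distrib] at hsum
  calc ∑ z ∈ T, |ptl t x z - ptl t x' z| = ∑ z ∈ T, σ z * (ptl t x z - ptl t x' z) :=
        Finset.sum_congr rfl fun z _ => (sign_mul_self _).symm
    _ ≤ |∑ z ∈ T, σ z * (ptl t x z - ptl t x' z)| := le_abs_self _
    _ ≤ 3 * M * (1 + Λ * t) ^ (-p) :=
        abs_le_of_hasSum_poisson (by positivity) hp hp1 (hM _ (abs_sum_smul_deltaFn_le T hσ)) hsum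

lemma one_add_mul_rpow_neg_le {θ : ℝ} (hΛ : 1 ≤ Λ) (ht : 0 ≤ t) (hθ0 : 0 ≤ θ) (hθ1 : θ ≤ 1) :
    (1 + Λ * t) ^ (-(θ / 2)) ≤ 2 * (Real.sqrt t + 1) ^ (-θ) := by
  have hbase : (Real.sqrt t + 1) ^ 2 / 2 ≤ 1 + Λ * t := by
    nlinarith [sq_nonneg (Real.sqrt t - 1), Real.sq_sqrt ht]
  have hsquare : ((Real.sqrt t + 1) ^ 2) ^ (-(θ / 2)) = (Real.sqrt t + 1) ^ (-θ) := by
    rw [← Real.rpow_natCast, ← Real.rpow_mul (by positivity)]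
    congr 1
    push_cast
    ring
  calc (1 + Λ * t) ^ (-(θ / 2)) ≤ ((Real.sqrt t + 1) ^ 2 / 2) ^ (-(θ / 2)) :=
        Real.rpow_le_rpow_of_nonpos (by positivity) hbase (by linarith)
    _ = 2 ^ (θ / 2) * (Real.sqrt t + 1) ^ (-θ) := by
        rw [Real.div_rpow (by positivity) zero_le_two, hsquare, Real.rpow_neg zero_le_two,
          div_inv_eq_mul, mul_comm]
    _ ≤ 2 * (Real.sqrt t + 1) ^ (-θ) := by
        gcongr
        exact Real.rpow_le_self_of_one_le one_le_two (by linarith)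

lemma exists_sum_abs_ptl_sub_le (k : ℕ) (hd : 2 ≤ d) {θ : ℝ} (hθ0 : 0 < θ) (hθ1 : θ < 1) :
    ∃ C : ℝ, 0 < C ∧ ∀ s : PairState d k, s.IsAdmissible → ∀ e, s.gap = signedUnit e →
      ∀ t : ℝ, 0 ≤ t → ∀ T : Finset (Conf d (k + 1)),
      ∑ z ∈ T, |ptl t s.leftConf z - ptl t s.rightConf z| ≤ C * (Real.sqrt t + 1) ^ (-θ) := by
  set Λ : ℝ := 4 * d + 2 * d * k
  have hd' : (2 : ℝ) ≤ d := by exact_mod_cast hd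
  have hΛ1 : 1 ≤ Λ := by nlinarith [k.cast_nonneg (α := ℝ)]
  have hij : (⟨0, by omega⟩ : Fin d) ≠ ⟨1, by omega⟩ := by simp
  obtain ⟨M, hM, hbound⟩ := PairState.exists_abs_uniformized_pow_sub_le k hij hθ0 hθ1
    (zero_lt_one.trans_le hΛ1) le_rfl
  refine ⟨3 * M * 2, by positivity, fun s hs e he t ht T => ?_⟩
  refine (sum_abs_ptl_sub_le (p := θ / 2) (zero_lt_one.trans_le hΛ1) ?_ (by positivity)
    (by linarith) ht hs.leftConf_injective hs.swap.leftConf_injective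
    (fun u hu m => hbound u hu s hs e he m) T).trans ?_
  · push_cast
    linarith
  · rw [mul_assoc (3 * M)]
    exact mul_le_mul_of_nonneg_left (one_add_mul_rpow_neg_le hΛ1 ht hθ0.le hθ1.le) (by positivity)

lemma add_e11_eq_cons (hd : 0 < d) (x : Conf d (k + 1)) :
    x + e11 d (k + 1) = Fin.cons (x 0 + signedUnit (⟨0, hd⟩, true)) (Fin.tail x) := by
  funext l
  refine Fin.cases ?_ (fun l => ?_) l
  · funext j
    simp [e11, signedUnit, Pi.single_apply, Fin.ext_iff]
  · funext j
    simp [e11, Fin.tail]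

lemma exists_pairState_of_add_e11 (hd : 0 < d) {x : Conf d (k + 1)} (hx : x ∈ SSet d (k + 1))
    (hx' : x + e11 d (k + 1) ∈ SSet d (k + 1)) :
    ∃ s : PairState d k, s.IsAdmissible ∧ s.gap = signedUnit (⟨0, hd⟩, false) ∧
      s.leftConf = x ∧ s.rightConf = x + e11 d (k + 1) := by
  have hcons := Fin.cons_self_tail x
  rw [mem_SSet_iff, ← hcons, Fin.cons_injective_iff] at hx
  rw [mem_SSet_iff, add_e11_eq_cons hd, Fin.cons_injective_iff] at hx'
  refine ⟨⟨x 0, x 0 + signedUnit ((⟨0, hd⟩ : Fin d), true), Fin.tail x⟩, ⟨hx.2, hx.1, hx'.1⟩, ?_,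
    hcons, (add_e11_eq_cons hd x).symm⟩
  rw [PairState.gap, sub_add_cancel_left]
  simp [signedUnit, Pi.single_neg]

end TotalVariation

/-- Theorem (total variation gradient bound): for integers `d ≥ 2`, `k ≥ 1` and `θ ∈ (0,1)`
there is a constant `C = C(θ,k,d)` such that for all `x ∈ 𝕊^k` with `x + e₁₁ ∈ 𝕊^k` and all
`t ≥ 0`, `Σ_{z ∈ 𝕊^k} |p_t^ℓ(x,z) − p_t^ℓ(x+e₁₁,z)| ≤ C (√t + 1)^{−θ}`. -/
theorem total_variation_gradient_bound (d k : ℕ) (hd : 2 ≤ d) (hk : 1 ≤ k)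
    (θ : ℝ) (hθ : θ ∈ Set.Ioo (0 : ℝ) 1) :
    ∃ C : ℝ, 0 < C ∧ ∀ x : Conf d k, x ∈ SSet d k → x + e11 d k ∈ SSet d k →
      ∀ t : ℝ, 0 ≤ t →
      Summable (fun z : SSet d k => |ptl t x z.val - ptl t (x + e11 d k) z.val|) ∧
      ∑' z : SSet d k, |ptl t x z.val - ptl t (x + e11 d k) z.val| ≤
        C * (Real.sqrt t + 1) ^ (-θ) := by
  obtain ⟨k, rfl⟩ := Nat.exists_eq_add_of_le' hk
  obtain ⟨C, hC, hbound⟩ := exists_sum_abs_ptl_sub_le k hd hθ.1 hθ.2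
  refine ⟨C, hC, fun x hx hx' t ht => ?_⟩
  obtain ⟨s, hs, hgap, hleft, hright⟩ := exists_pairState_of_add_e11 (by omega) hx hx'
  have hfinite (T : Finset (SSet d (k + 1))) :
      ∑ z ∈ T, |ptl t x z.val - ptl t (x + e11 d (k + 1)) z.val| ≤
        C * (Real.sqrt t + 1) ^ (-θ) := by
    have h := hbound s hs _ hgap t ht (T.map (Function.Embedding.subtype _))
    rwa [hleft, hright, Finset.sum_map] at h
  exact ⟨summable_of_sum_le (fun _ => abs_nonneg _) hfinite,
    Real.tsum_le_of_sum_le (fun _ => abs_nonneg _) hfinite⟩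

end SSEPPaper
end
end

section
/- Let d, k ≥ 1 be integers. There exists a constant C = C(k, d) such that for all x ∈ (ℤ^d)^k and all t ≥ 0, Σ_{z ∈ (ℤ^d)^k} |p_t^{rw}(x,z) − p_t^{rw}(x + e₁₁, z)| ≤ C / (√t + 1). -/
/-!
For a contraction `U`, the coefficients of `e^{t(U-1)}(1-U)` in powers of `U` are the Poisson
weights of parameter `t` times `1 - n/t`. Since the Poisson law has variance `t`, their absolute
values sum to at most `1/√t`, which bounds the norm whatever `U` is. On `ℓ¹` the walk generator is
`L = ∑ g, (T_g - 1)` with commuting translations `T_g`. Split off the jump `e`: the other jumps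
contribute a contraction to `e^{tL}(1 - T_e)`, so this operator has norm `O(1/(√t + 1))`; it maps
the unit mass at `x` to `p_t(x,·) - p_t(x+e,·)`, whose total variation is its `ℓ¹` norm.
-/

open scoped Classical

noncomputable section

namespace SSEPPaper

section BanachAlgebra

open NormedSpace

variable {A : Type*} [NormedRing A] [NormedAlgebra ℝ A] [CompleteSpace A]

lemma hasSum_descFactorial_smul_pow (j : ℕ) (t : ℝ) (x : A) :
    HasSum (fun n : ℕ => (t ^ n / n.factorial * n.descFactorial j) • x ^ n)
      (t ^ j • (exp (t • x) * x ^ j)) := by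
  have head_eq_zero : ∑ n ∈ Finset.range j, (t ^ n / n.factorial * n.descFactorial j) • x ^ n = 0 :=
    Finset.sum_eq_zero fun n hn => by
      simp [Nat.descFactorial_of_lt (Finset.mem_range.1 hn)]
  rw [← hasSum_nat_add_iff' j, head_eq_zero, sub_zero]
  convert! ((exp_series_hasSum_exp' (𝕂 := ℝ) (t • x)).mul_right (x ^ j)).const_smul (t ^ j)
    using 2 with n
  have factorial_eq : ((n + j).factorial : ℝ) = n.factorial * (n + j).descFactorial j := by
    exact_mod_cast (by simpa using
      (Nat.factorial_mul_descFactorial (Nat.le_add_left j n)).symm)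
  have descFactorial_ne_zero : ((n + j).descFactorial j : ℝ) ≠ 0 := by
    simp [Nat.descFactorial_eq_zero_iff_lt]
  rw [smul_pow, smul_smul, smul_mul_assoc, ← pow_add, smul_smul, factorial_eq, pow_add]
  congr 1
  field_simp

lemma hasSum_exp_smul (t : ℝ) (x : A) :
    HasSum (fun n : ℕ => (t ^ n / n.factorial) • x ^ n) (exp (t • x)) := by
  simpa using hasSum_descFactorial_smul_pow 0 t x

lemma hasSum_sub_natCast_smul_pow (t : ℝ) (x : A) :
    HasSum (fun n : ℕ => (t ^ n / n.factorial * (t - n)) • x ^ n)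
      (t • (exp (t • x) * (1 - x))) := by
  convert! ((hasSum_exp_smul t x).const_smul t).sub (hasSum_descFactorial_smul_pow 1 t x)
    using 1
  · funext n
    rw [Nat.descFactorial_one, smul_smul, ← sub_smul]
    congr 1
    ring
  · simp only [pow_one, mul_sub, mul_one, smul_sub]

lemma hasSum_poisson_factorial_moment (j : ℕ) (t : ℝ) :
    HasSum (fun n : ℕ => t ^ n / n.factorial * n.descFactorial j) (t ^ j * Real.exp t) := by
  simpa [Real.exp_eq_exp_ℝ] using hasSum_descFactorial_smul_pow j t (1 : ℝ)

lemma hasSum_poisson_mass (t : ℝ) :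
    HasSum (fun n : ℕ => t ^ n / n.factorial) (Real.exp t) := by
  simpa using hasSum_poisson_factorial_moment 0 t

lemma hasSum_poisson_variance (t : ℝ) :
    HasSum (fun n : ℕ => t ^ n / n.factorial * (t - n) ^ 2) (t * Real.exp t) := by
  convert! ((hasSum_poisson_factorial_moment 2 t).add
    ((hasSum_poisson_factorial_moment 1 t).mul_left (1 - 2 * t))).add
    ((hasSum_poisson_mass t).mul_left (t ^ 2)) using 1
  · funext n
    rw [Nat.cast_descFactorial_two, Nat.descFactorial_one]
    ring
  · ring

lemma exp_add_of_commute_real {x y : A} (hxy : Commute x y) : exp (x + y) = exp x * exp y := by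
  let _ : NormedAlgebra ℚ A := NormedAlgebra.restrictScalars ℚ ℝ A
  exact exp_add_of_commute hxy

lemma exp_sub_smul_one (x : A) (c : ℝ) : exp (x - c • 1) = Real.exp (-c) • exp x := by
  have commute : Commute x (algebraMap ℝ A (-c)) := (Algebra.commutes (-c) x).symm
  rw [sub_eq_add_neg, ← neg_smul, ← Algebra.algebraMap_eq_smul_one, exp_add_of_commute_real commute,
    ← algebraMap_exp_comm, ← Real.exp_eq_exp_ℝ, ← Algebra.commutes, Algebra.smul_def]

variable [NormOneClass A]

lemma norm_exp_le_exp_norm (x : A) : ‖exp x‖ ≤ Real.exp ‖x‖ := by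
  refine (exp_series_hasSum_exp' (𝕂 := ℝ) x).norm_le_of_bounded (hasSum_poisson_mass ‖x‖)
    fun n => ?_
  rw [norm_smul, norm_inv, RCLike.norm_natCast, div_eq_inv_mul]
  gcongr
  exact norm_pow_le x n

lemma norm_exp_smul_sum_sub_one_le {ι : Type*} {U : ι → A} {s : Finset ι}
    (hU : ∀ i ∈ s, ‖U i‖ ≤ 1) {t : ℝ} (ht : 0 ≤ t) :
    ‖exp (t • ∑ i ∈ s, (U i - 1))‖ ≤ 1 := by
  have recenter : t • ∑ i ∈ s, (U i - 1) = t • ∑ i ∈ s, U i - (t * s.card) • 1 := by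
    rw [Finset.sum_sub_distrib, Finset.sum_const, smul_sub, mul_smul, Nat.cast_smul_eq_nsmul]
  have norm_sum_le : ‖t • ∑ i ∈ s, U i‖ ≤ t * s.card := by
    rw [norm_smul, Real.norm_of_nonneg ht]
    gcongr
    simpa using norm_sum_le_of_le s hU
  calc ‖exp (t • ∑ i ∈ s, (U i - 1))‖
      = Real.exp (-(t * s.card)) * ‖exp (t • ∑ i ∈ s, U i)‖ := by
        rw [recenter, exp_sub_smul_one, norm_smul, Real.norm_of_nonneg (Real.exp_nonneg _)]
    _ ≤ Real.exp (-(t * s.card)) * Real.exp (t * s.card) := by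
        gcongr
        exact (norm_exp_le_exp_norm _).trans (Real.exp_le_exp.2 norm_sum_le)
    _ = 1 := by rw [← Real.exp_add, neg_add_cancel, Real.exp_zero]

lemma norm_exp_smul_sub_one_le {x : A} (hx : ‖x‖ ≤ 1) {t : ℝ} (ht : 0 ≤ t) :
    ‖exp (t • (x - 1))‖ ≤ 1 := by
  simpa using norm_exp_smul_sum_sub_one_le (s := {()}) (U := fun _ => x) (fun _ _ => hx) ht

lemma abs_le_add_sq_div_two_sqrt {t : ℝ} (ht : 0 < t) (y : ℝ) :
    |y| ≤ (t + y ^ 2) / (2 * √t) := by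
  rw [le_div_iff₀ (by positivity)]
  nlinarith [two_mul_le_add_sq (√t) |y|, Real.sq_sqrt ht.le, sq_abs y]

lemma norm_exp_smul_mul_one_sub_le {x : A} (hx : ‖x‖ ≤ 1) {t : ℝ} (ht : 0 < t) :
    ‖exp (t • x) * (1 - x)‖ ≤ Real.exp t / √t := by
  have majorant : HasSum (fun n : ℕ => t ^ n / n.factorial * ((t + (t - n) ^ 2) / (2 * √t)))
      (t * (Real.exp t / √t)) := by
    convert! (((hasSum_poisson_mass t).mul_left t).add (hasSum_poisson_variance t)).div_const
      (2 * √t) using 1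
    · funext n
      ring
    · ring
  have norm_smul_le : ‖t • (exp (t • x) * (1 - x))‖ ≤ t * (Real.exp t / √t) := by
    refine (hasSum_sub_natCast_smul_pow t x).norm_le_of_bounded majorant fun n => ?_
    have norm_pow_le_one : ‖x ^ n‖ ≤ 1 := (norm_pow_le x n).trans (pow_le_one₀ (norm_nonneg x) hx)
    rw [norm_smul, norm_mul, Real.norm_of_nonneg (by positivity : 0 ≤ t ^ n / (n.factorial : ℝ)),
      Real.norm_eq_abs]
    refine (mul_le_of_le_one_right (by positivity) norm_pow_le_one).trans ?_
    gcongr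
    exact abs_le_add_sq_div_two_sqrt ht _
  rw [norm_smul, Real.norm_of_nonneg ht.le] at norm_smul_le
  exact le_of_mul_le_mul_left norm_smul_le ht

lemma norm_exp_smul_sub_one_mul_one_sub_le_inv_sqrt {x : A} (hx : ‖x‖ ≤ 1) {t : ℝ} (ht : 0 < t) :
    ‖exp (t • (x - 1)) * (1 - x)‖ ≤ 1 / √t := by
  have exp_eq : exp (t • (x - 1)) = Real.exp (-t) • exp (t • x) := by
    rw [smul_sub, exp_sub_smul_one]
  calc ‖exp (t • (x - 1)) * (1 - x)‖ = Real.exp (-t) * ‖exp (t • x) * (1 - x)‖ := by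
        rw [exp_eq, smul_mul_assoc, norm_smul, Real.norm_of_nonneg (Real.exp_nonneg _)]
    _ ≤ Real.exp (-t) * (Real.exp t / √t) := by
        gcongr
        exact norm_exp_smul_mul_one_sub_le hx ht
    _ = 1 / √t := by rw [← mul_div_assoc, ← Real.exp_add, neg_add_cancel, Real.exp_zero]

lemma norm_exp_smul_sub_one_mul_one_sub_le {x : A} (hx : ‖x‖ ≤ 1) {t : ℝ} (ht : 0 ≤ t) :
    ‖exp (t • (x - 1)) * (1 - x)‖ ≤ 3 / (√t + 1) := by
  have le_two : ‖exp (t • (x - 1)) * (1 - x)‖ ≤ 2 := by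
    calc ‖exp (t • (x - 1)) * (1 - x)‖ ≤ ‖exp (t • (x - 1))‖ * (‖(1 : A)‖ + ‖x‖) :=
          (norm_mul_le _ _).trans (by gcongr; exact norm_sub_le 1 x)
      _ ≤ 1 * (1 + 1) := by
          gcongr
          exacts [norm_exp_smul_sub_one_le hx ht, norm_one.le]
      _ = 2 := by norm_num
  have mul_sqrt_le_one : ‖exp (t • (x - 1)) * (1 - x)‖ * √t ≤ 1 := by
    rcases ht.eq_or_lt with rfl | ht
    · simp
    · exact (le_div_iff₀ (Real.sqrt_pos.2 ht)).1
        (norm_exp_smul_sub_one_mul_one_sub_le_inv_sqrt hx ht)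
  rw [le_div_iff₀ (by positivity)]
  linarith

lemma norm_exp_smul_sum_sub_one_mul_one_sub_le {ι : Type*} {U : ι → A} {s : Finset ι} {i : ι}
    (hi : i ∈ s) (hU : ∀ j ∈ s, ‖U j‖ ≤ 1) (hcomm : ∀ j ∈ s, Commute (U j) (U i))
    {t : ℝ} (ht : 0 ≤ t) :
    ‖exp (t • ∑ j ∈ s, (U j - 1)) * (1 - U i)‖ ≤ 3 / (√t + 1) := by
  have commute_rest : Commute (t • ∑ j ∈ s.erase i, (U j - 1)) (t • (U i - 1)) :=
    ((Commute.sum_left _ _ _ fun j hj => ((hcomm j (Finset.mem_of_mem_erase hj)).sub_right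
      (Commute.one_right _)).sub_left (Commute.one_left _)).smul_left t).smul_right t
  calc ‖exp (t • ∑ j ∈ s, (U j - 1)) * (1 - U i)‖
      = ‖exp (t • ∑ j ∈ s.erase i, (U j - 1)) * (exp (t • (U i - 1)) * (1 - U i))‖ := by
        rw [← Finset.sum_erase_add _ _ hi, smul_add, exp_add_of_commute_real commute_rest,
          mul_assoc]
    _ ≤ 1 * (3 / (√t + 1)) := by
        refine norm_mul_le_of_le ?_ (norm_exp_smul_sub_one_mul_one_sub_le (hU i hi) ht)
        exact norm_exp_smul_sum_sub_one_le (fun j hj => hU j (Finset.mem_of_mem_erase hj)) ht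
    _ = 3 / (√t + 1) := one_mul _

end BanachAlgebra

section FiniteRangeWalk

open NormedSpace
open scoped lp

lemma hasSum_abs_apply {α : Type*} (f : ℓ¹(α, ℝ)) : HasSum (fun a => |f a|) ‖f‖ := by
  simpa using lp.hasSum_norm (by simp) f

instance {α : Type*} [Nonempty α] : Nontrivial ℓ¹(α, ℝ) :=
  let a : α := Classical.arbitrary α
  nontrivial_of_ne (lp.single 1 a 1) 0 <| norm_ne_zero_iff.1 <| by
    rw [lp.norm_single one_pos, norm_one]
    exact one_ne_zero

section Translation

variable {G : Type*} [AddGroup G]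

lemma memℓp_one_comp_sub_right {f : G → ℝ} (hf : Memℓp f 1) (g : G) :
    Memℓp (fun x => f (x - g)) 1 :=
  memℓp_gen <| (Equiv.subRight g).summable_iff.2 <| hf.summable (by simp)

/-- The translation `f ↦ f(· - g)` of summable functions, which sends the unit mass at `x` to the
unit mass at `x + g`. -/
def translation (g : G) : ℓ¹(G, ℝ) →L[ℝ] ℓ¹(G, ℝ) :=
  LinearIsometry.toContinuousLinearMap
    { toFun := fun f => ⟨fun x => f (x - g), memℓp_one_comp_sub_right f.2 g⟩
      map_add' := fun _ _ => rfl
      map_smul' := fun _ _ => rfl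
      norm_map' := fun f => (hasSum_abs_apply _).unique <|
        (Equiv.subRight g).hasSum_iff.2 (hasSum_abs_apply f) }

lemma translation_apply (g : G) (f : ℓ¹(G, ℝ)) (x : G) : translation g f x = f (x - g) := rfl

lemma norm_translation_le (g : G) : ‖translation g‖ ≤ 1 :=
  LinearIsometry.norm_toContinuousLinearMap_le _

/-- The backward generator `f ↦ ∑ g ∈ s, (f(· + g) - f)` of the continuous-time walk which makes
each jump `g ∈ s` at rate one, acting on observables. -/
def backwardGenerator (s : Finset G) (f : G → ℝ) (x : G) : ℝ := ∑ g ∈ s, (f (x + g) - f x)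

/-- The forward generator of the walk which makes each jump `g ∈ s` at rate one, acting on
distributions; it is the transpose of `backwardGenerator s`. -/
def forwardGenerator (s : Finset G) : ℓ¹(G, ℝ) →L[ℝ] ℓ¹(G, ℝ) := ∑ g ∈ s, (translation g - 1)

variable [DecidableEq G]

lemma translation_single (g x : G) (c : ℝ) :
    translation g (lp.single 1 x c) = lp.single 1 (x + g) c := by
  ext y
  simp only [translation_apply, lp.single_apply, Pi.single_apply, sub_eq_iff_eq_add]

lemma forwardGenerator_single (s : Finset G) (x : G) (c : ℝ) :
    forwardGenerator s (lp.single 1 x c)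
      = ∑ g ∈ s, (lp.single 1 (x + g) c - lp.single 1 x c) := by
  simp only [forwardGenerator, sum_apply, sub_apply, translation_single, one_apply_eq_self]

lemma backwardGenerator_iterate_deltaFn (s : Finset G) (n : ℕ) (x y : G) :
    (backwardGenerator s)^[n] (deltaFn y) x = (forwardGenerator s ^ n) (lp.single 1 x 1) y := by
  induction n generalizing x with
  | zero => simp [deltaFn, Pi.single_apply, eq_comm]
  | succ n ih =>
    rw [Function.iterate_succ_apply', pow_succ, mul_apply_eq_comp, forwardGenerator_single, map_sum,
      lp.coeFn_sum, Finset.sum_apply]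
    simp only [backwardGenerator, ih, map_sub, lp.coeFn_sub, Pi.sub_apply]

lemma tsum_backwardGenerator_iterate_deltaFn (s : Finset G) (t : ℝ) (x y : G) :
    ∑' n : ℕ, t ^ n / n.factorial * (backwardGenerator s)^[n] (deltaFn y) x
      = exp (t • forwardGenerator s) (lp.single 1 x 1) y := by
  simp only [backwardGenerator_iterate_deltaFn]
  exact (((hasSum_exp_smul t (forwardGenerator s)).mapL
    (ContinuousLinearMap.apply ℝ _ (lp.single 1 x 1))).mapL (lp.evalCLM ℝ _ 1 y)).tsum_eq

end Translation

variable {G : Type*} [AddCommGroup G]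

lemma commute_translation (g h : G) : Commute (translation g) (translation h) := by
  ext f x
  simp only [mul_apply_eq_comp, translation_apply, sub_right_comm]

lemma norm_exp_forwardGenerator_single_sub_le [DecidableEq G] {s : Finset G} {g : G} (hg : g ∈ s)
    (x : G) {t : ℝ} (ht : 0 ≤ t) :
    ‖exp (t • forwardGenerator s) (lp.single 1 x 1)
      - exp (t • forwardGenerator s) (lp.single 1 (x + g) 1)‖ ≤ 3 / (√t + 1) := by
  have difference_eq : exp (t • forwardGenerator s) (lp.single 1 x 1)
      - exp (t • forwardGenerator s) (lp.single 1 (x + g) 1)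
      = (exp (t • forwardGenerator s) * (1 - translation g)) (lp.single 1 x 1) := by
    rw [mul_apply_eq_comp, sub_apply, one_apply_eq_self, translation_single, map_sub]
  have operator_bound : ‖exp (t • forwardGenerator s) * (1 - translation g)‖ ≤ 3 / (√t + 1) :=
    norm_exp_smul_sum_sub_one_mul_one_sub_le hg (fun h _ => norm_translation_le h)
      (fun h _ => commute_translation h g) ht
  rw [difference_eq]
  refine (ContinuousLinearMap.le_of_opNorm_le _ operator_bound _).trans_eq ?_
  rw [lp.norm_single one_pos, norm_one, mul_one]

end FiniteRangeWalk

section IndependentWalks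

open NormedSpace
open scoped lp

variable {d k : ℕ}

lemma abs_apply_le_cnorm (x : Conf d k) (i : Fin k) (j : Fin d) : |(x i j : ℝ)| ≤ cnorm x := by
  refine Real.abs_le_sqrt ?_
  rw [← Fintype.sum_prod_type' fun i j => (x i j : ℝ) ^ 2]
  exact Finset.single_le_sum (f := fun p : Fin k × Fin d => (x p.1 p.2 : ℝ) ^ 2)
    (fun _ _ => sq_nonneg _) (Finset.mem_univ (i, j))

lemma finite_setOf_cnorm_eq_one : {g : Conf d k | cnorm g = 1}.Finite := by
  refine (Set.finite_Icc (-1 : Conf d k) 1).subset fun g hg => ?_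
  have abs_le_one (i : Fin k) (j : Fin d) : |g i j| ≤ 1 := by
    exact_mod_cast (abs_apply_le_cnorm g i j).trans_eq hg
  exact ⟨fun i j => (abs_le.1 (abs_le_one i j)).1, fun i j => (abs_le.1 (abs_le_one i j)).2⟩

/-- The set of jumps of `k` independent simple random walks on `ℤ^d`. -/
def unitSteps (d k : ℕ) : Finset (Conf d k) := finite_setOf_cnorm_eq_one.toFinset

lemma mem_unitSteps {g : Conf d k} : g ∈ unitSteps d k ↔ cnorm g = 1 := by simp [unitSteps]

lemma Lrw_eq_backwardGenerator : Lrw (d := d) (k := k) = backwardGenerator (unitSteps d k) := by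
  ext f x
  rw [Lrw, ← (Equiv.addLeft x).tsum_eq, tsum_eq_sum (s := unitSteps d k)]
  · refine Finset.sum_congr rfl fun g hg => ?_
    simp [mem_unitSteps.1 hg]
  · intro g hg
    simp [mt mem_unitSteps.2 hg]

lemma ptrw_eq_exp_forwardGenerator (t : ℝ) (x z : Conf d k) :
    ptrw t x z = exp (t • forwardGenerator (unitSteps d k)) (lp.single 1 x 1) z := by
  rw [ptrw, Lrw_eq_backwardGenerator, tsum_backwardGenerator_iterate_deltaFn]

lemma cnorm_e11 (hd : 1 ≤ d) (hk : 1 ≤ k) : cnorm (e11 d k) = 1 := by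
  obtain ⟨d, rfl⟩ := Nat.exists_eq_add_of_le' hd
  obtain ⟨k, rfl⟩ := Nat.exists_eq_add_of_le' hk
  simp [cnorm, e11, Fin.sum_univ_succ, Finset.filter_eq']

theorem rw_total_variation_gradient_bound_general {e : Conf d k} (he : cnorm e = 1)
    (x : Conf d k) {t : ℝ} (ht : 0 ≤ t) :
    Summable (fun z : Conf d k => |ptrw t x z - ptrw t (x + e) z|) ∧
      ∑' z : Conf d k, |ptrw t x z - ptrw t (x + e) z| ≤ 3 / (√t + 1) := by
  have total_variation := hasSum_abs_apply
    (exp (t • forwardGenerator (unitSteps d k)) (lp.single 1 x 1)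
      - exp (t • forwardGenerator (unitSteps d k)) (lp.single 1 (x + e) 1))
  simp only [lp.coeFn_sub, Pi.sub_apply, ← ptrw_eq_exp_forwardGenerator] at total_variation
  refine ⟨total_variation.summable, total_variation.tsum_eq.trans_le ?_⟩
  exact norm_exp_forwardGenerator_single_sub_le (mem_unitSteps.2 he) x ht

end IndependentWalks

/-- Proposition (gradient bound for independent random walks): for integers `d, k ≥ 1` there is
`C = C(k,d)` such that for all `x ∈ (ℤ^d)^k` and `t ≥ 0`,
`Σ_{z ∈ (ℤ^d)^k} |p_t^{rw}(x,z) − p_t^{rw}(x+e₁₁,z)| ≤ C / (√t + 1)`. -/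
theorem rw_total_variation_gradient_bound (d k : ℕ) (hd : 1 ≤ d) (hk : 1 ≤ k) :
    ∃ C : ℝ, 0 < C ∧ ∀ x : Conf d k, ∀ t : ℝ, 0 ≤ t →
      Summable (fun z : Conf d k => |ptrw t x z - ptrw t (x + e11 d k) z|) ∧
      ∑' z : Conf d k, |ptrw t x z - ptrw t (x + e11 d k) z| ≤ C / (Real.sqrt t + 1) := by
  exact ⟨3, by norm_num, fun x _ ht =>
    rw_total_variation_gradient_bound_general (cnorm_e11 hd hk) x ht⟩

end SSEPPaper
end
end
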